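/- arXiv:1009.4691 — 10 statements merged into one kernel-verified Lean document; each statement's English description precedes it below -/
import Mathlib

section
/- For every n ∈ ℕ and all complex edge weights (u,v,w), the conditional partition functions of the diamond hierarchical lattice satisfy the Migdal–Kadanoff RG equations: U_{n+1} = (U_n² + V_n²)², V_{n+1} = V_n²·(U_n + W_n)², and W_{n+1} = (V_n² + W_n²)²; equivalently, (U_n, V_n, W_n) = R̂^n(u, v, w). -/
/-- A finite (multi)graph with oriented edges and two marked vertices `a`, `b`. -/
structure MarkedGraph where
  V : Type
  E : Type
  [fintV : Fintype V]
  [decV : DecidableEq V]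
  [fintE : Fintype E]
  src : E → V
  tgt : E → V
  a : V
  b : V

attribute [instance] MarkedGraph.fintV MarkedGraph.decV MarkedGraph.fintE

/-- Sources of the four edges of the diamond graph: `a→c`, `c→b`, `a→d`, `d→b`,
where the vertices `a, b, c, d` are labelled `0, 1, 2, 3`. -/
def dSrc : Fin 4 → Fin 4 := ![0, 2, 0, 3]

/-- Targets of the four edges of the diamond graph. -/
def dTgt : Fin 4 → Fin 4 := ![2, 1, 3, 1]

/-- The gluing map sending a vertex of the `i`-th copy of `G` to a vertex of the graph
obtained by replacing each edge of the diamond by a copy of `G`: the two marked vertices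
are identified with the endpoints of the `i`-th diamond edge, interior vertices are kept. -/
def glue (G : MarkedGraph) (i : Fin 4) (x : G.V) :
    Fin 4 ⊕ (Fin 4 × {v : G.V // v ≠ G.a ∧ v ≠ G.b}) :=
  if hx : x = G.a then Sum.inl (dSrc i)
  else if hx' : x = G.b then Sum.inl (dTgt i)
  else Sum.inr (i, ⟨x, hx, hx'⟩)

/-- Replace each of the four edges of the diamond graph by a copy of `G`, gluing the
marked vertices of the copies to the diamond vertices; the marked vertices of the result
are the diamond vertices `a = 0` and `b = 1`. -/
def diamondStep (G : MarkedGraph) : MarkedGraph where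
  V := Fin 4 ⊕ (Fin 4 × {v : G.V // v ≠ G.a ∧ v ≠ G.b})
  E := Fin 4 × G.E
  src := fun e => glue G e.1 (G.src e.2)
  tgt := fun e => glue G e.1 (G.tgt e.2)
  a := Sum.inl 0
  b := Sum.inl 1

/-- The diamond hierarchical lattice: `Γ₀` is a single edge joining the marked vertices,
and `Γ_{n+1}` is obtained from the diamond by replacing each edge with `Γ_n`. -/
def DHLGraph : ℕ → MarkedGraph
  | 0 => { V := Bool, E := Unit, src := fun _ => false, tgt := fun _ => true,
           a := false, b := true }
  | n + 1 => diamondStep (DHLGraph n)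

/-- Edge weights: `ω(+1,+1) = u`, `ω(+1,−1) = ω(−1,+1) = v`, `ω(−1,−1) = w`,
where the spin `+1` is encoded by `true` and `−1` by `false`. -/
def spinWeight (u v w : ℂ) : Bool → Bool → ℂ
  | true, true => u
  | true, false => v
  | false, true => v
  | false, false => w

/-- The conditional partition function `Z^{ε,ε'}`: the sum over all spin configurations
`σ : V → {±1}` with `σ(a) = ε` and `σ(b) = ε'` of the product over all edges of the
corresponding weights. -/
noncomputable def condZ (G : MarkedGraph) (u v w : ℂ) (ε ε' : Bool) : ℂ :=
  ∑ σ ∈ Finset.univ.filter (fun σ : G.V → Bool => σ G.a = ε ∧ σ G.b = ε'),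
    ∏ e : G.E, spinWeight u v w (σ (G.src e)) (σ (G.tgt e))

/-- The Migdal–Kadanoff renormalization map `R̂(U,V,W) = ((U²+V²)², V²(U+W)², (V²+W²)²)`. -/
def MKmap (p : ℂ × ℂ × ℂ) : ℂ × ℂ × ℂ :=
  ((p.1 ^ 2 + p.2.1 ^ 2) ^ 2, p.2.1 ^ 2 * (p.1 + p.2.2) ^ 2, (p.2.1 ^ 2 + p.2.2 ^ 2) ^ 2)

/-!
The conditional partition functions of a marked graph form a matrix indexed by the two boundary
spins. Conditioning on the spins of the four vertices of the diamond makes the four glued copies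
independent, so `Γ_{n+1}` has the partition matrix of a single diamond whose edge weights are the
entries of the partition matrix `Z` of `Γ_n`. In one diamond, summing over the middle spin of a path
multiplies matrices and putting the two paths in parallel multiplies entries, so one step of the
hierarchy is `Z ↦ (Z * Z) ⊙ (Z * Z)`. This map preserves symmetric `2 × 2` matrices, and in their
three entries it is `R̂`.
-/

open Matrix

section PartitionMatrix

variable {S R : Type*}

lemma sum_filter_comp_inl_eq_sum_sumElim {α β : Type*} [Fintype α] [Fintype β] [DecidableEq α]
    [DecidableEq β] [Fintype S] [AddCommMonoid R] (p : (α → S) → Prop) [DecidablePred p]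
    (f : (α ⊕ β → S) → R) :
    ∑ σ with p (σ ∘ Sum.inl), f σ = ∑ κ with p κ, ∑ τ, f (Sum.elim κ τ) := by
  have sum_eq_sum_sumElim (g : (α ⊕ β → S) → R) : ∑ σ, g σ = ∑ κ, ∑ τ, g (Sum.elim κ τ) :=
    ((Equiv.sumArrowEquivProdArrow α β S).symm.sum_comp g).symm.trans (Fintype.sum_prod_type _)
  simp only [Finset.sum_filter, sum_eq_sum_sumElim, Sum.elim_comp_inl]
  refine Finset.sum_congr rfl fun κ _ ↦ ?_
  by_cases hκ : p κ <;> simp [hκ]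

lemma sum_filter_fin_four_eq_sum_prod [Fintype S] [DecidableEq S] [AddCommMonoid R] (s t : S)
    (f : (Fin 4 → S) → R) :
    ∑ κ with κ 0 = s ∧ κ 1 = t, f κ = ∑ p : S × S, f ![s, t, p.1, p.2] := by
  have eta (κ : Fin 4 → S) : ![κ 0, κ 1, κ 2, κ 3] = κ := by
    funext i
    fin_cases i <;> rfl
  refine Finset.sum_bij' (fun κ _ ↦ (κ 2, κ 3)) (fun p _ ↦ ![s, t, p.1, p.2]) (by simp) (by simp)
    ?_ (by simp) ?_
  all_goals
    intro κ hκ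
    obtain ⟨rfl, rfl⟩ := (Finset.mem_filter.mp hκ).2
    rw [eta]

namespace MarkedGraph

variable (G : MarkedGraph)

/-- The unmarked vertices of a marked graph, in the form in which `glue` uses them. -/
abbrev Interior : Type := {x : G.V // x ≠ G.a ∧ x ≠ G.b}

/-- The spin configuration with spin `s` at `a`, spin `t` at `b`, and spins `τ` elsewhere. If
`a = b`, the spin there is `s`. -/
def extend (s t : S) (τ : G.Interior → S) (x : G.V) : S :=
  if ha : x = G.a then s else if hb : x = G.b then t else τ ⟨x, ha, hb⟩

/-- The Boltzmann weight of a spin configuration `σ`, for spins in an arbitrary type and edge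
weights given by a matrix `ω`. -/
def weight [CommMonoid R] (ω : Matrix S S R) (σ : G.V → S) : R :=
  ∏ e, ω (σ (G.src e)) (σ (G.tgt e))

/-- The matrix of conditional partition functions: the `(s, t)` entry is the sum of the weights of
the configurations with spin `s` at `a` and spin `t` at `b`. -/
def partitionMatrix [Fintype S] [DecidableEq S] [CommSemiring R] (ω : Matrix S S R) :
    Matrix S S R :=
  .of fun s t ↦ ∑ σ : G.V → S with σ G.a = s ∧ σ G.b = t, G.weight ω σ

variable {G}

lemma extend_a (s t : S) (τ : G.Interior → S) : G.extend s t τ G.a = s :=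
  dif_pos rfl

lemma extend_b (hab : G.a ≠ G.b) (s t : S) (τ : G.Interior → S) : G.extend s t τ G.b = t := by
  simp [extend, hab.symm]

lemma extend_interior (s t : S) (τ : G.Interior → S) (x : G.Interior) :
    G.extend s t τ x = τ x := by
  simp [extend, x.2.1, x.2.2]

lemma extend_restrict (σ : G.V → S) : G.extend (σ G.a) (σ G.b) (fun x ↦ σ x) = σ := by
  funext x
  unfold extend
  split_ifs with ha hb
  · rw [ha]
  · rw [hb]
  · rfl

lemma partitionMatrix_apply_eq_sum_extend [Fintype S] [DecidableEq S] [CommSemiring R]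
    (hab : G.a ≠ G.b) (ω : Matrix S S R) (s t : S) :
    G.partitionMatrix ω s t = ∑ τ, G.weight ω (G.extend s t τ) := by
  refine Finset.sum_bij' (fun σ _ x ↦ σ x) (fun τ _ ↦ G.extend s t τ) (by simp)
    (by simp [extend_a, extend_b hab]) ?_ (fun τ _ ↦ funext (extend_interior s t τ)) ?_
  all_goals
    intro σ hσ
    obtain ⟨rfl, rfl⟩ := (Finset.mem_filter.mp hσ).2
    rw [extend_restrict]

end MarkedGraph

/-- The diamond graph itself, with `a, b, c, d` labelled `0, 1, 2, 3` as in `dSrc` and `dTgt`. -/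
def diamond : MarkedGraph where
  V := Fin 4
  E := Fin 4
  src := dSrc
  tgt := dTgt
  a := 0
  b := 1

/-- The renormalization map on matrices of edge weights: two edges in series multiply as matrices,
and the two branches in parallel multiply entrywise. -/
def diamondMap [Fintype S] [NonUnitalNonAssocSemiring R] (A : Matrix S S R) : Matrix S S R :=
  (A * A) ⊙ (A * A)

lemma sumElim_glue (G : MarkedGraph) (κ : Fin 4 → S) (τ : Fin 4 × G.Interior → S) (i : Fin 4)
    (x : G.V) :
    Sum.elim κ τ (glue G i x) = G.extend (κ (dSrc i)) (κ (dTgt i)) (fun y ↦ τ (i, y)) x := by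
  unfold glue MarkedGraph.extend
  split_ifs <;> rfl

lemma weight_diamondStep [CommMonoid R] (G : MarkedGraph) (ω : Matrix S S R) (κ : Fin 4 → S)
    (τ : Fin 4 × G.Interior → S) :
    (diamondStep G).weight ω (Sum.elim κ τ) =
      ∏ i, G.weight ω (G.extend (κ (dSrc i)) (κ (dTgt i)) fun x ↦ τ (i, x)) := by
  simp only [MarkedGraph.weight, ← sumElim_glue]
  exact Fintype.prod_prod_type _

variable [Fintype S] [DecidableEq S] [CommSemiring R]

lemma sum_weight_diamondStep {G : MarkedGraph} (hab : G.a ≠ G.b) (ω : Matrix S S R)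
    (κ : Fin 4 → S) :
    ∑ τ, (diamondStep G).weight ω (Sum.elim κ τ) = diamond.weight (G.partitionMatrix ω) κ := by
  let copyWeight (i : Fin 4) (τ : G.Interior → S) : R :=
    G.weight ω (G.extend (κ (dSrc i)) (κ (dTgt i)) τ)
  calc ∑ τ, (diamondStep G).weight ω (Sum.elim κ τ)
    _ = ∑ τ : Fin 4 × G.Interior → S, ∏ i, copyWeight i fun x ↦ τ (i, x) :=
      Finset.sum_congr rfl fun τ _ ↦ weight_diamondStep G ω κ τ
    _ = ∑ τ : Fin 4 → G.Interior → S, ∏ i, copyWeight i (τ i) :=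
      (Equiv.curry _ _ _).sum_comp fun τ ↦ ∏ i, copyWeight i (τ i)
    _ = ∏ i, ∑ τ, copyWeight i τ := (Fintype.prod_sum _).symm
    _ = diamond.weight (G.partitionMatrix ω) κ :=
      Finset.prod_congr rfl fun i _ ↦
        (MarkedGraph.partitionMatrix_apply_eq_sum_extend hab ω _ _).symm

lemma partitionMatrix_diamondStep {G : MarkedGraph} (hab : G.a ≠ G.b) (ω : Matrix S S R) :
    (diamondStep G).partitionMatrix ω = diamond.partitionMatrix (G.partitionMatrix ω) := by
  ext s t
  calc (diamondStep G).partitionMatrix ω s t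
    _ = ∑ κ : Fin 4 → S with κ 0 = s ∧ κ 1 = t, ∑ τ, (diamondStep G).weight ω (Sum.elim κ τ) :=
      sum_filter_comp_inl_eq_sum_sumElim (fun κ : Fin 4 → S ↦ κ 0 = s ∧ κ 1 = t) _
    _ = ∑ κ : Fin 4 → S with κ 0 = s ∧ κ 1 = t, diamond.weight (G.partitionMatrix ω) κ :=
      Finset.sum_congr rfl fun κ _ ↦ sum_weight_diamondStep hab ω κ

lemma partitionMatrix_diamond (A : Matrix S S R) : diamond.partitionMatrix A = diamondMap A := by
  ext s t
  calc diamond.partitionMatrix A s t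
    _ = ∑ p : S × S, diamond.weight A ![s, t, p.1, p.2] :=
      sum_filter_fin_four_eq_sum_prod s t _
    _ = ∑ p : S × S, A s p.1 * A p.1 t * (A s p.2 * A p.2 t) := by
      refine Finset.sum_congr rfl fun p _ ↦ (Fin.prod_univ_four _).trans ?_
      simp [diamond, dSrc, dTgt, mul_assoc]
    _ = diamondMap A s t := by
      simp only [diamondMap, hadamard_apply, mul_apply, Fintype.sum_mul_sum, Fintype.sum_prod_type]

lemma DHLGraph_a_ne_b (n : ℕ) : (DHLGraph n).a ≠ (DHLGraph n).b := by
  cases n with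
  | zero => exact Bool.false_ne_true
  | succ n => exact Sum.inl_injective.ne zero_ne_one

lemma partitionMatrix_DHLGraph_zero (ω : Matrix S S R) :
    (DHLGraph 0).partitionMatrix ω = ω := by
  have : IsEmpty (DHLGraph 0).Interior := ⟨fun ⟨_, ha, hb⟩ ↦ hb (Bool.eq_true_of_not_eq_false ha)⟩
  ext s t
  calc (DHLGraph 0).partitionMatrix ω s t
    _ = ∑ τ, (DHLGraph 0).weight ω ((DHLGraph 0).extend s t τ) :=
      MarkedGraph.partitionMatrix_apply_eq_sum_extend (DHLGraph_a_ne_b 0) ω s t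
    _ = (DHLGraph 0).weight ω ((DHLGraph 0).extend s t isEmptyElim) := Fintype.sum_unique _
    _ = ω s t := Fintype.prod_unique fun _ : Unit ↦ ω s t

lemma partitionMatrix_DHLGraph_succ (n : ℕ) (ω : Matrix S S R) :
    (DHLGraph (n + 1)).partitionMatrix ω = diamondMap ((DHLGraph n).partitionMatrix ω) :=
  (partitionMatrix_diamondStep (DHLGraph_a_ne_b n) ω).trans (partitionMatrix_diamond _)

theorem migdal_kadanoff_RG_general (n : ℕ) (ω : Matrix S S R) :
    (DHLGraph (n + 1)).partitionMatrix ω = diamondMap ((DHLGraph n).partitionMatrix ω) ∧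
      (DHLGraph n).partitionMatrix ω = diamondMap^[n] ω := by
  refine ⟨partitionMatrix_DHLGraph_succ n ω, ?_⟩
  induction n with
  | zero => exact partitionMatrix_DHLGraph_zero ω
  | succ n ih => rw [partitionMatrix_DHLGraph_succ, ih, Function.iterate_succ_apply']

end PartitionMatrix

/-- The symmetric matrix of edge weights `spinWeight u v w`, as a function of the point
`(u, v, w)` on which `MKmap` acts. -/
def spinMatrix (p : ℂ × ℂ × ℂ) : Matrix Bool Bool ℂ :=
  .of (spinWeight p.1 p.2.1 p.2.2)

lemma semiconj_spinMatrix_MKmap_diamondMap :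
    Function.Semiconj spinMatrix MKmap diamondMap := by
  intro p
  ext s t
  cases s <;> cases t <;>
    simp [spinMatrix, spinWeight, MKmap, diamondMap, mul_apply] <;> ring

lemma condZ_DHLGraph (n : ℕ) (u v w : ℂ) (s t : Bool) :
    condZ (DHLGraph n) u v w s t = spinMatrix (MKmap^[n] (u, v, w)) s t := by
  rw [semiconj_spinMatrix_MKmap_diamondMap.iterate_right n (u, v, w),
    ← (migdal_kadanoff_RG_general n _).2]
  rfl

lemma condZ_triple_eq_MKmap_iterate (n : ℕ) (u v w : ℂ) :
    (condZ (DHLGraph n) u v w true true, condZ (DHLGraph n) u v w true false,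
      condZ (DHLGraph n) u v w false false) = MKmap^[n] (u, v, w) := by
  simp only [condZ_DHLGraph, spinMatrix, of_apply, spinWeight]

/-- **Migdal–Kadanoff RG equations.**  The conditional partition functions
`U_n = Z_n^{+,+}`, `V_n = Z_n^{+,−}`, `W_n = Z_n^{−,−}` of the diamond hierarchical
lattice satisfy `U_{n+1} = (U_n² + V_n²)²`, `V_{n+1} = V_n²(U_n + W_n)²`,
`W_{n+1} = (V_n² + W_n²)²`; equivalently `(U_n, V_n, W_n) = R̂^n (u, v, w)`. -/
theorem migdal_kadanoff_RG (n : ℕ) (u v w : ℂ) :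
    (condZ (DHLGraph (n + 1)) u v w true true =
        ((condZ (DHLGraph n) u v w true true) ^ 2 +
          (condZ (DHLGraph n) u v w true false) ^ 2) ^ 2 ∧
      condZ (DHLGraph (n + 1)) u v w true false =
        (condZ (DHLGraph n) u v w true false) ^ 2 *
          (condZ (DHLGraph n) u v w true true + condZ (DHLGraph n) u v w false false) ^ 2 ∧
      condZ (DHLGraph (n + 1)) u v w false false =
        ((condZ (DHLGraph n) u v w true false) ^ 2 +
          (condZ (DHLGraph n) u v w false false) ^ 2) ^ 2) ∧
    (condZ (DHLGraph n) u v w true true, condZ (DHLGraph n) u v w true false,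
      condZ (DHLGraph n) u v w false false) = MKmap^[n] (u, v, w) := by
  have iterate_eq (m : ℕ) := condZ_triple_eq_MKmap_iterate m u v w
  have step := iterate_eq (n + 1)
  rw [Function.iterate_succ_apply', ← iterate_eq n] at step
  exact ⟨by simpa only [MKmap, Prod.mk.injEq] using step, iterate_eq n⟩
end

section
/- The Migdal–Kadanoff renormalization is algebraically stable: for every integer n ≥ 1, the three components of the n-fold composition R̂^n : ℂ³ → ℂ³ are homogeneous polynomials of degree 4^n that have no nonconstant common polynomial factor. Equivalently, the algebraic degree satisfies deg(R^n) = 4^n = (deg R)^n for all n. -/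
open MvPolynomial

/-- The components of the Migdal–Kadanoff renormalization
`R̂(U,V,W) = ((U²+V²)², V²(U+W)², (V²+W²)²)` as multivariate polynomials in the
variables `U = X 0`, `V = X 1`, `W = X 2`. -/
noncomputable def MKcomp : Fin 3 → MvPolynomial (Fin 3) ℂ :=
  ![(X 0 ^ 2 + X 1 ^ 2) ^ 2, X 1 ^ 2 * (X 0 + X 2) ^ 2, (X 1 ^ 2 + X 2 ^ 2) ^ 2]

/-- The components of the `n`-fold iterate `R̂^n`, obtained by repeated substitution. -/
noncomputable def MKiter : ℕ → Fin 3 → MvPolynomial (Fin 3) ℂ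
  | 0 => fun i => X i
  | n + 1 => fun i => bind₁ (MKiter n) (MKcomp i)

/-!
Suppose an irreducible `p` divides all components of `R̂^n`, and let `L` be the function field of
the surface `p = 0`, with generic point `x ∈ L³`. Then some iterate of `x` is nonzero but killed by
the next application of `R̂`, which forces it to be an indeterminacy point `(±i : 1 : ∓i)`. In the
chart `V ≠ 0`, with `u = U/V` and `w = W/V`, the map is the coordinatewise square of
`(a, c) = ((u² + 1)/(u + w), (1 + w²)/(u + w))`, and `u - a = w - c` is a square root of `ac - 1`;
so points of this chart with coordinates algebraic over `ℂ` have only such preimages. (The one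
contracted curve `U + W = 0` goes to `(1 : 0 : 1)`, outside the chart.) Hence `x` itself is such a
point: `p` divides both `U - αV` and `W - γV` for some `α, γ ∈ ℂ`, which are relatively prime.
-/

section GeneralAlgebra

universe u

lemma isRelPrime_X_sub_X_sub {σ R : Type*} [CommRing R] [IsDomain R] {i j : σ}
    {f g : MvPolynomial σ R} (hij : i ≠ j) (hif : i ∉ f.vars) (hig : i ∉ g.vars)
    (hjg : j ∉ g.vars) : IsRelPrime (X i - f) (X j - g) := by
  classical
  have irreducible_X_sub : Irreducible (X i - f) := by
    simpa [sub_eq_add_neg] using irreducible_mul_X_add 1 (-f) i one_ne_zero (by simp)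
      (by rwa [vars_neg]) isRelPrime_one_left
  refine irreducible_X_sub.isRelPrime_iff_not_dvd.2 fun hdvd => ?_
  let substitution : MvPolynomial σ R →ₐ[R] MvPolynomial σ R := aeval (Function.update X i f)
  have substitution_fixes {h : MvPolynomial σ R} (hih : i ∉ h.vars) : substitution h = h := by
    refine hom_congr_vars (f₁ := substitution.toRingHom) (f₂ := RingHom.id _) ?_ ?_ rfl
    · ext; simp [substitution]
    · intro k hk _
      have hki : k ≠ i := fun h => hih (h ▸ hk)
      simp [substitution, hki]
  have hXg : X j - g = 0 := by
    have := map_dvd substitution hdvd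
    rw [map_sub, map_sub, substitution_fixes hif, substitution_fixes hig] at this
    simpa [substitution, hij.symm] using this
  exact hjg (by simp [← sub_eq_zero.1 hXg])

lemma isRelPrime_X_sub_C_mul_X {σ R : Type*} [CommRing R] [IsDomain R] {i j k : σ}
    (hij : i ≠ j) (hik : i ≠ k) (hjk : j ≠ k) (a c : R) :
    IsRelPrime (X i - C a * X k) (X j - C c * X k) := by
  classical
  have notMem_vars (b : R) {l : σ} (hlk : l ≠ k) : l ∉ (C b * X k).vars :=
    fun h => hlk (by simpa using vars_mul _ _ h)
  exact isRelPrime_X_sub_X_sub hij (notMem_vars a hik) (notMem_vars c hik) (notMem_vars c hjk)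

lemma exists_algHom_field_eq_zero_iff_dvd {A : Type u} (K : Type*) [CommRing K] [CommRing A]
    [Algebra K A] {p : A} (hp : Prime p) :
    ∃ (L : Type u) (_ : Field L) (_ : Algebra K L) (φ : A →ₐ[K] L), ∀ f, φ f = 0 ↔ p ∣ f := by
  have : (Ideal.span {p}).IsPrime := (Ideal.span_singleton_prime hp.ne_zero).2 hp
  refine ⟨FractionRing (A ⧸ Ideal.span {p}), inferInstance, inferInstance,
    (IsScalarTower.toAlgHom K (A ⧸ Ideal.span {p}) _).comp (Ideal.Quotient.mkₐ K _), fun f => ?_⟩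
  simp [Ideal.Quotient.eq_zero_iff_mem, Ideal.mem_span_singleton]

lemma exists_algebraMap_eq_of_isAlgebraic {K B : Type*} [Field K] [IsAlgClosed K] [CommRing B]
    [IsDomain B] [Algebra K B] {b : B} (hb : IsAlgebraic K b) : ∃ a : K, algebraMap K B a = b :=
  minpoly.mem_range_of_degree_eq_one K b <|
    IsAlgClosed.degree_eq_one_of_irreducible K (minpoly.irreducible hb.isIntegral)

end GeneralAlgebra

section PointMap

variable {R : Type*} [CommSemiring R]

/-- The Migdal–Kadanoff map `R̂` on triples `(U, V, W)` over an arbitrary commutative semiring. -/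
def migdalKadanoff (x : Fin 3 → R) : Fin 3 → R :=
  ![(x 0 ^ 2 + x 1 ^ 2) ^ 2, x 1 ^ 2 * (x 0 + x 2) ^ 2, (x 1 ^ 2 + x 2 ^ 2) ^ 2]

lemma aeval_MKcomp [Algebra ℂ R] (x : Fin 3 → R) (i : Fin 3) :
    aeval x (MKcomp i) = migdalKadanoff x i := by
  fin_cases i <;> simp [MKcomp, migdalKadanoff]

lemma aeval_MKiter [Algebra ℂ R] (x : Fin 3 → R) (n : ℕ) (i : Fin 3) :
    aeval x (MKiter n i) = migdalKadanoff^[n] x i := by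
  induction n generalizing i with
  | zero => simp [MKiter]
  | succ n ih =>
    simp only [MKiter, aeval_bind₁, ih, aeval_MKcomp, Function.iterate_succ_apply']

lemma migdalKadanoff_semiconj_const :
    Function.Semiconj (Function.const (Fin 3)) (fun c : R => 4 * c ^ 4) migdalKadanoff := by
  intro c
  ext i
  fin_cases i <;> dsimp [migdalKadanoff] <;> ring

end PointMap

lemma MKiter_ne_zero (n : ℕ) (i : Fin 3) : MKiter n i ≠ 0 := by
  intro hzero
  have iterate_ne_zero : (fun c : ℂ => 4 * c ^ 4)^[n] 1 ≠ 0 :=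
    Function.Iterate.rec (· ≠ 0) one_ne_zero (fun c hc => by simpa using hc) n
  have eval_const : aeval (Function.const (Fin 3) (1 : ℂ)) (MKiter n i) =
      (fun c : ℂ => 4 * c ^ 4)^[n] 1 := by
    rw [aeval_MKiter, ← (migdalKadanoff_semiconj_const.iterate_right n).eq, Function.const_apply]
  rw [hzero, map_zero] at eval_const
  exact iterate_ne_zero eval_const.symm

lemma MKcomp_isHomogeneous (i : Fin 3) : (MKcomp i).IsHomogeneous 4 := by
  have hX := isHomogeneous_X (σ := Fin 3) ℂ
  fin_cases i
  · exact (((hX 0).pow 2).add ((hX 1).pow 2)).pow 2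
  · exact ((hX 1).pow 2).mul (((hX 0).add (hX 2)).pow 2)
  · exact (((hX 1).pow 2).add ((hX 2).pow 2)).pow 2

lemma MKiter_isHomogeneous (n : ℕ) (i : Fin 3) : (MKiter n i).IsHomogeneous (4 ^ n) := by
  induction n generalizing i with
  | zero => exact isHomogeneous_X ℂ i
  | succ n ih => exact (MKcomp_isHomogeneous i).aeval _ ih

section AlgebraicPoints

variable (K : Type*) {L : Type*} [Field K] [Field L] [Algebra K L]

/-- The point `(x 0 : x 1 : x 2)` of the projective plane over `L` lies in the affine chart
`x 1 ≠ 0`, and its affine coordinates there are algebraic over `K`. -/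
def IsAlgebraicInChart (x : Fin 3 → L) : Prop :=
  x 1 ≠ 0 ∧ IsAlgebraic K (x 0 / x 1) ∧ IsAlgebraic K (x 2 / x 1)

variable {K}

lemma isAlgebraic_of_affine_migdalKadanoff {u w : L} (huw : u + w ≠ 0)
    (hu : IsAlgebraic K (((u ^ 2 + 1) / (u + w)) ^ 2))
    (hw : IsAlgebraic K (((1 + w ^ 2) / (u + w)) ^ 2)) :
    IsAlgebraic K u ∧ IsAlgebraic K w := by
  set a := (u ^ 2 + 1) / (u + w) with ha
  set c := (1 + w ^ 2) / (u + w) with hc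
  have algebraic_a : IsAlgebraic K a := hu.of_pow two_pos
  have algebraic_c : IsAlgebraic K c := hw.of_pow two_pos
  have sub_eq_sub : u - a = w - c := by
    rw [ha, hc]; field_simp; ring
  have sq_eq : (u - a) ^ 2 = a * c - 1 := by
    rw [ha, hc]; field_simp; ring
  have algebraic_sub : IsAlgebraic K (u - a) :=
    .of_pow two_pos (sq_eq ▸ (algebraic_a.mul algebraic_c).sub isAlgebraic_one)
  exact ⟨sub_add_cancel u a ▸ algebraic_sub.add algebraic_a,
    sub_add_cancel w c ▸ (sub_eq_sub ▸ algebraic_sub).add algebraic_c⟩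

namespace IsAlgebraicInChart

lemma of_migdalKadanoff {x : Fin 3 → L} (h : IsAlgebraicInChart K (migdalKadanoff x)) :
    IsAlgebraicInChart K x := by
  obtain ⟨hV, hU, hW⟩ := h
  simp only [migdalKadanoff, Matrix.cons_val] at hV hU hW
  have hx : x 1 ≠ 0 := fun h => hV (by simp [h])
  have hxx : x 0 + x 2 ≠ 0 := fun h => hV (by simp [h])
  refine ⟨hx, isAlgebraic_of_affine_migdalKadanoff ?_ ?_ ?_⟩
  · rw [← add_div]
    exact div_ne_zero hxx hx
  · convert hU using 1
    field_simp
  · convert hW using 1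
    field_simp

lemma of_migdalKadanoff_eq_zero {x : Fin 3 → L} (hx : x ≠ 0) (h : migdalKadanoff x = 0) :
    IsAlgebraicInChart K x := by
  have hU : x 0 ^ 2 + x 1 ^ 2 = 0 := by simpa [migdalKadanoff] using congrFun h 0
  have hW : x 2 ^ 2 + x 1 ^ 2 = 0 := by simpa [migdalKadanoff, add_comm] using congrFun h 2
  have hx1 : x 1 ≠ 0 := by
    intro h1
    apply hx
    ext i
    fin_cases i <;> simp_all
  have algebraic_of_sq {t : L} (ht : t ^ 2 + x 1 ^ 2 = 0) : IsAlgebraic K (t / x 1) := by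
    refine .of_pow two_pos ?_
    have : (t / x 1) ^ 2 = -1 := by
      field_simp; linear_combination ht
    rw [this]
    exact isAlgebraic_one.neg
  exact ⟨hx1, algebraic_of_sq hU, algebraic_of_sq hW⟩

lemma of_migdalKadanoff_iterate_eq_zero {x : Fin 3 → L} {n : ℕ} (hx : x ≠ 0)
    (h : migdalKadanoff^[n] x = 0) : IsAlgebraicInChart K x := by
  induction n generalizing x with
  | zero => exact absurd h hx
  | succ n ih =>
    by_cases hRx : migdalKadanoff x = 0
    · exact of_migdalKadanoff_eq_zero hx hRx
    · exact (ih hRx h).of_migdalKadanoff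

lemma exists_eq_algebraMap_mul [IsAlgClosed K] {x : Fin 3 → L} (h : IsAlgebraicInChart K x) :
    ∃ a c : K, x 0 = algebraMap K L a * x 1 ∧ x 2 = algebraMap K L c * x 1 := by
  obtain ⟨hx, h0, h2⟩ := h
  obtain ⟨a, ha⟩ := exists_algebraMap_eq_of_isAlgebraic h0
  obtain ⟨c, hc⟩ := exists_algebraMap_eq_of_isAlgebraic h2
  exact ⟨a, c, (div_eq_iff hx).1 ha.symm, (div_eq_iff hx).1 hc.symm⟩

end IsAlgebraicInChart

end AlgebraicPoints

lemma not_forall_dvd_MKiter_of_prime {p : MvPolynomial (Fin 3) ℂ} (hp : Prime p) (n : ℕ) :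
    ¬ ∀ i, p ∣ MKiter n i := by
  intro hdvd
  obtain ⟨L, _, _, φ, hφ⟩ := exists_algHom_field_eq_zero_iff_dvd ℂ hp
  have not_dvd_both (a c : ℂ) (h0 : p ∣ X 0 - C a * X 1) (h2 : p ∣ X 2 - C c * X 1) : False :=
    hp.not_isUnit <|
      isRelPrime_X_sub_C_mul_X (by decide) (by decide) (by decide) a c h0 h2
  have generic_ne_zero : φ ∘ X ≠ 0 := fun h => not_dvd_both 0 0
    (by simpa [← hφ] using congrFun h 0) (by simpa [← hφ] using congrFun h 2)
  have iterate_eq_zero : migdalKadanoff^[n] (φ ∘ X) = 0 := by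
    ext i
    rw [← aeval_MKiter, ← aeval_unique]
    exact (hφ _).2 (hdvd i)
  obtain ⟨a, c, h0, h2⟩ := (IsAlgebraicInChart.of_migdalKadanoff_iterate_eq_zero (K := ℂ)
    generic_ne_zero iterate_eq_zero).exists_eq_algebraMap_mul
  refine not_dvd_both a c ((hφ _).1 ?_) ((hφ _).1 ?_)
  · simpa [sub_eq_zero, ← algebraMap_eq] using h0
  · simpa [sub_eq_zero, ← algebraMap_eq] using h2

/-- **Algebraic stability of the Migdal–Kadanoff renormalization.**  For every `n ≥ 1`
the three components of `R̂^n` are nonzero homogeneous polynomials of degree `4^n` with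
no nonconstant common factor; equivalently `deg (R^n) = 4^n = (deg R)^n`. -/
theorem MK_algebraically_stable (n : ℕ) (hn : 1 ≤ n) :
    (∀ i, MKiter n i ≠ 0) ∧
    (∀ i, (MKiter n i).IsHomogeneous (4 ^ n)) ∧
    ∀ d : MvPolynomial (Fin 3) ℂ, (∀ i, d ∣ MKiter n i) → IsUnit d := by
  refine ⟨MKiter_ne_zero n, MKiter_isHomogeneous n, fun d hd => ?_⟩
  by_contra hunit
  have hd0 : d ≠ 0 := ne_zero_of_dvd_ne_zero (MKiter_ne_zero n 0) (hd 0)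
  obtain ⟨p, hp, hpd⟩ := WfDvdMonoid.exists_irreducible_factor hunit hd0
  exact not_forall_dvd_MKiter_of_prime hp.prime n fun i => hpd.trans (hd i)
end

section
/- The polynomial (Z² + T²)⁴ divides each of the three components of the composition R̂_phys ∘ R̂_phys, and the three quotient polynomials, which are homogeneous of degree 28, have no nonconstant common polynomial factor. Consequently the algebraic degree of the second iterate satisfies deg(R_phys²) = 28 < 36 = (deg R_phys)², so the map R_phys is not algebraically stable. -/
open MvPolynomial

/-- The components of the homogeneous renormalization in physical coordinates,
`R̂_phys(Z,T,Y) = (Z²(Z²+T²)², T²(Z²+Y²)², (Z²+T²)(T²Z²+Y⁴))`, as multivariate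
polynomials in `Z = X 0`, `T = X 1`, `Y = X 2`. -/
noncomputable def RphysComp : Fin 3 → MvPolynomial (Fin 3) ℂ :=
  ![X 0 ^ 2 * (X 0 ^ 2 + X 1 ^ 2) ^ 2,
    X 1 ^ 2 * (X 0 ^ 2 + X 2 ^ 2) ^ 2,
    (X 0 ^ 2 + X 1 ^ 2) * (X 1 ^ 2 * X 0 ^ 2 + X 2 ^ 4)]

/-- The components of the second iterate `R̂_phys ∘ R̂_phys`. -/
noncomputable def RphysSq : Fin 3 → MvPolynomial (Fin 3) ℂ :=
  fun i => bind₁ RphysComp (RphysComp i)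

/-!
Write `A = Z² + T²`, `B = Z² + Y²`, `C = T²Z² + Y⁴`. Since `A` divides the first and third
components of `R̂_phys`, the pullbacks of `A` and `B` by `R̂_phys` are `D = Z⁴A⁴ + T⁴B⁴` and `A²E`
with `E = Z⁴A² + C²`, and `A⁴` splits off from the second iterate, leaving `Z⁴D²` and `T⁴B⁴E²` as
its first two components. These two already have no common factor: eliminating `Z` from any pair
of their factors leaves a nonzero polynomial in `T, Y` alone, so an irreducible common divisor
would not involve `Z`, yet it would divide a polynomial that is monic in `Z`.
-/

section MonicInFirstVariable

variable {R : Type*}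

theorem finSuccEquiv_rename_succ [CommSemiring R] {n : ℕ} (p : MvPolynomial (Fin n) R) :
    finSuccEquiv R n (rename Fin.succ p) = Polynomial.C p := by
  induction p using MvPolynomial.induction_on with
  | C a => simp [finSuccEquiv_apply]
  | add f g hf hg => simp [hf, hg]
  | mul_X f i hf => simp [hf, finSuccEquiv_X_succ]

variable [CommRing R] [IsDomain R]

theorem isRelPrime_C_of_isPrimitive {p : Polynomial R} (hp : p.IsPrimitive) {c : R}
    (hc : c ≠ 0) : IsRelPrime p (Polynomial.C c) := by
  intro d hdp hdc
  have hdeg : d.natDegree = 0 := by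
    simpa using Polynomial.natDegree_le_of_dvd hdc (Polynomial.C_ne_zero.mpr hc)
  rw [Polynomial.eq_C_of_natDegree_eq_zero hdeg] at hdp ⊢
  exact (hp _ hdp).map Polynomial.C

theorem isRelPrime_rename_succ_of_monic {n : ℕ} {p : MvPolynomial (Fin (n + 1)) R}
    (hp : (finSuccEquiv R n p).Monic) {c : MvPolynomial (Fin n) R} (hc : c ≠ 0) :
    IsRelPrime p (rename Fin.succ c) := by
  apply IsRelPrime.of_map (finSuccEquiv R n)
  rw [finSuccEquiv_rename_succ]
  exact isRelPrime_C_of_isPrimitive hp.isPrimitive hc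

end MonicInFirstVariable

section Pullbacks

variable {S : Type*}

/-- The pullback `D` of `Z² + T²` by `R̂_phys`, evaluated at elements of an arbitrary ring because
the ideal-theoretic identities below do not depend on the polynomial ring. -/
def pullbackZT [CommSemiring S] (z t y : S) : S :=
  z ^ 4 * (z ^ 2 + t ^ 2) ^ 4 + t ^ 4 * (z ^ 2 + y ^ 2) ^ 4

/-- The pullback of `Z² + Y²` by `R̂_phys` divided by `(Z² + T²)²`, called `E` above, evaluated at
elements of an arbitrary ring. -/
def reducedPullbackZY [CommSemiring S] (z t y : S) : S :=
  z ^ 4 * (z ^ 2 + t ^ 2) ^ 2 + (t ^ 2 * z ^ 2 + y ^ 4) ^ 2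

variable [CommRing S]

/-- The polynomial in `T, Y` alone left after eliminating `Z` from `pullbackZT` and
`reducedPullbackZY` and cancelling a power of `Z`. -/
def eliminant (t y : S) : S :=
  (t ^ 2 + y ^ 2) * (t ^ 2 - y ^ 2) ^ 4 * (5 * t ^ 2 + y ^ 2)

theorem pullbackZT_sub_reducedPullbackZY (z t y : S) :
    pullbackZT z t y - (z ^ 2 + t ^ 2) ^ 2 * reducedPullbackZY z t y =
      -(z ^ 2 * (t ^ 2 - y ^ 2) ^ 2 *
        (2 * t ^ 2 * z ^ 4 + (t ^ 2 + y ^ 2) ^ 2 * z ^ 2 + 2 * t ^ 2 * y ^ 4)) := by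
  simp only [pullbackZT, reducedPullbackZY]
  ring

-- Division with remainder by the last factor of `pullbackZT_sub_reducedPullbackZY`. Both
-- polynomials are palindromic in `z² / y²`, which is why the remainder is a monomial in `z`.
theorem four_mul_reducedPullbackZY (z t y : S) :
    4 * t ^ 4 * reducedPullbackZY z t y =
      (2 * t ^ 2 * z ^ 4 + (4 * t ^ 4 - (t ^ 2 + y ^ 2) ^ 2) * z ^ 2 + 2 * t ^ 2 * y ^ 4) *
        (2 * t ^ 2 * z ^ 4 + (t ^ 2 + y ^ 2) ^ 2 * z ^ 2 + 2 * t ^ 2 * y ^ 4) +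
      z ^ 4 * ((t ^ 2 + y ^ 2) * (t ^ 2 - y ^ 2) ^ 2 * (5 * t ^ 2 + y ^ 2)) := by
  simp only [reducedPullbackZY]
  ring

theorem dvd_pow_mul_eliminant {d z t y : S} (hD : d ∣ pullbackZT z t y)
    (hE : d ∣ reducedPullbackZY z t y) :
    d ∣ z ^ 6 * eliminant t y := by
  set G := 2 * t ^ 2 * z ^ 4 + (t ^ 2 + y ^ 2) ^ 2 * z ^ 2 + 2 * t ^ 2 * y ^ 4 with hG
  set K := 2 * t ^ 2 * z ^ 4 + (4 * t ^ 4 - (t ^ 2 + y ^ 2) ^ 2) * z ^ 2 + 2 * t ^ 2 * y ^ 4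
    with hK
  have hdG : d ∣ z ^ 2 * (t ^ 2 - y ^ 2) ^ 2 * G := by
    rw [← dvd_neg, ← pullbackZT_sub_reducedPullbackZY]
    exact dvd_sub hD (hE.mul_left _)
  have hremainder := four_mul_reducedPullbackZY z t y
  rw [← hG, ← hK] at hremainder
  have hcombination :
      z ^ 6 * eliminant t y =
        4 * t ^ 4 * z ^ 2 * (t ^ 2 - y ^ 2) ^ 2 * reducedPullbackZY z t y -
          K * (z ^ 2 * (t ^ 2 - y ^ 2) ^ 2 * G) := by
    rw [eliminant]
    linear_combination -(z ^ 2 * (t ^ 2 - y ^ 2) ^ 2) * hremainder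
  rw [hcombination]
  exact dvd_sub (hE.mul_left _) (hdG.mul_left _)

variable [DecompositionMonoid S] {z t y : S}

theorem isRelPrime_sq_add_sq (hzt : IsRelPrime z t) : IsRelPrime z (z ^ 2 + t ^ 2) := by
  rw [sq z]
  exact hzt.pow_right.mul_add_left_right z

theorem isRelPrime_reducedPullbackZY (hzy : IsRelPrime z y) :
    IsRelPrime z (reducedPullbackZY z t y) := by
  have hzC : IsRelPrime z (t ^ 2 * z * z + y ^ 4) := hzy.pow_right.mul_add_right_right _
  convert (hzC.pow_right (n := 2)).mul_add_left_right (z ^ 3 * (z ^ 2 + t ^ 2) ^ 2) using 1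
  rw [reducedPullbackZY]
  ring

theorem isRelPrime_pullbackZT_right (hzt : IsRelPrime z t) : IsRelPrime (pullbackZT z t y) t := by
  have htA : IsRelPrime t (t ^ 2 + z ^ 2) := isRelPrime_sq_add_sq hzt.symm
  have hZA : IsRelPrime (z ^ 4 * (z ^ 2 + t ^ 2) ^ 4) t :=
    hzt.pow_left.mul_left (add_comm (t ^ 2) _ ▸ htA.symm.pow_left)
  convert hZA.add_mul_left_left (t ^ 3 * (z ^ 2 + y ^ 2) ^ 4) using 1
  rw [pullbackZT]
  ring

theorem isRelPrime_pullbackZT_sq_add_sq (hzy : IsRelPrime z y)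
    (hAB : IsRelPrime (z ^ 2 + t ^ 2) (z ^ 2 + y ^ 2)) :
    IsRelPrime (pullbackZT z t y) (z ^ 2 + y ^ 2) := by
  have hZA : IsRelPrime (z ^ 4 * (z ^ 2 + t ^ 2) ^ 4) (z ^ 2 + y ^ 2) :=
    (isRelPrime_sq_add_sq hzy).pow_left.mul_left hAB.pow_left
  convert hZA.add_mul_left_left (t ^ 4 * (z ^ 2 + y ^ 2) ^ 3) using 1
  rw [pullbackZT]
  ring

theorem isRelPrime_pullbackZT_reducedPullbackZY (hzy : IsRelPrime z y)
    (hEc : IsRelPrime (reducedPullbackZY z t y) (eliminant t y)) :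
    IsRelPrime (pullbackZT z t y) (reducedPullbackZY z t y) := by
  intro d hD hE
  have hdz : IsRelPrime d (z ^ 6) :=
    ((isRelPrime_reducedPullbackZY hzy).symm.of_dvd_left hE).pow_right
  exact hEc hE (hdz.dvd_of_dvd_mul_left (dvd_pow_mul_eliminant hD hE))

theorem isRelPrime_mul_pullbackZT_mul_reducedPullbackZY (hzt : IsRelPrime z t)
    (hzy : IsRelPrime z y) (hAB : IsRelPrime (z ^ 2 + t ^ 2) (z ^ 2 + y ^ 2))
    (hEc : IsRelPrime (reducedPullbackZY z t y) (eliminant t y)) (k l m n r : ℕ) :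
    IsRelPrime (z ^ k * pullbackZT z t y ^ l)
      (t ^ m * (z ^ 2 + y ^ 2) ^ n * reducedPullbackZY z t y ^ r) := by
  refine .mul_left ?_ ?_
  · exact (hzt.pow.mul_right (isRelPrime_sq_add_sq hzy).pow).mul_right
      (isRelPrime_reducedPullbackZY hzy).pow
  · exact ((isRelPrime_pullbackZT_right hzt).pow.mul_right
      (isRelPrime_pullbackZT_sq_add_sq hzy hAB).pow).mul_right
      (isRelPrime_pullbackZT_reducedPullbackZY hzy hEc).pow

end Pullbacks

section Nonvanishing

variable {σ R : Type*} [CommRing R] [Nontrivial R] {i j : σ}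

theorem X_sq_add_X_sq_ne_zero (hij : i ≠ j) :
    (X i ^ 2 + X j ^ 2 : MvPolynomial σ R) ≠ 0 := by
  classical
  intro h
  have heval := congrArg (eval (Pi.single i 1)) h
  simp [hij.symm] at heval

theorem X_sq_sub_X_sq_ne_zero (hij : i ≠ j) :
    (X i ^ 2 - X j ^ 2 : MvPolynomial σ R) ≠ 0 := by
  classical
  intro h
  have heval := congrArg (eval (Pi.single i 1)) h
  simp [hij.symm] at heval

theorem eliminant_X_ne_zero (hij : i ≠ j) :
    (eliminant (X i) (X j) : MvPolynomial σ R) ≠ 0 := by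
  classical
  intro h
  have heval := congrArg (eval (Pi.single j 1)) h
  norm_num [eliminant, hij] at heval

end Nonvanishing

section Coordinates

variable {R : Type*} [CommRing R]

theorem monic_finSuccEquiv_reducedPullbackZY :
    (finSuccEquiv R 2 (reducedPullbackZY (X 0) (X 1) (X 2))).Monic := by
  have hX1 : finSuccEquiv R 2 (X 1) = Polynomial.C (X 0) := finSuccEquiv_X_succ (j := 0)
  have hX2 : finSuccEquiv R 2 (X 2) = Polynomial.C (X 1) := finSuccEquiv_X_succ (j := 1)
  simp only [reducedPullbackZY, map_add, map_mul, map_pow, finSuccEquiv_X_zero, hX1, hX2]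
  rw [← map_pow Polynomial.C, ← map_pow Polynomial.C]
  monicity!

variable [IsDomain R]

theorem isRelPrime_X_zero_X_succ {n : ℕ} (j : Fin n) :
    IsRelPrime (X 0 : MvPolynomial (Fin (n + 1)) R) (X j.succ) := by
  have hmonic : (finSuccEquiv R n (X 0)).Monic := by
    rw [finSuccEquiv_X_zero]
    exact Polynomial.monic_X
  simpa using isRelPrime_rename_succ_of_monic hmonic (X_ne_zero j)

theorem isRelPrime_X_sq_add_X_sq {n : ℕ} {i j : Fin n} (hij : i ≠ j) :
    IsRelPrime (X 0 ^ 2 + X i.succ ^ 2 : MvPolynomial (Fin (n + 1)) R)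
      (X 0 ^ 2 + X j.succ ^ 2) := by
  have hmonic : (finSuccEquiv R n (X 0 ^ 2 + X j.succ ^ 2)).Monic := by
    simp only [map_add, map_pow, finSuccEquiv_X_zero, finSuccEquiv_X_succ]
    rw [← map_pow]
    exact Polynomial.monic_X_pow_add_C _ two_ne_zero
  have hdiff : IsRelPrime (X 0 ^ 2 + X j.succ ^ 2 : MvPolynomial (Fin (n + 1)) R)
      (X i.succ ^ 2 - X j.succ ^ 2) := by
    simpa using isRelPrime_rename_succ_of_monic hmonic (X_sq_sub_X_sq_ne_zero hij)
  have hdecomp : (X 0 ^ 2 + X i.succ ^ 2 : MvPolynomial (Fin (n + 1)) R) =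
      X i.succ ^ 2 - X j.succ ^ 2 + (X 0 ^ 2 + X j.succ ^ 2) * 1 := by
    ring
  rw [hdecomp]
  exact hdiff.symm.add_mul_left_left 1

theorem isRelPrime_reducedPullbackZY_eliminant :
    IsRelPrime (reducedPullbackZY (X 0) (X 1) (X 2) : MvPolynomial (Fin 3) R)
      (eliminant (X 1) (X 2)) := by
  have hrename := isRelPrime_rename_succ_of_monic
    (monic_finSuccEquiv_reducedPullbackZY (R := R)) (eliminant_X_ne_zero zero_ne_one)
  simpa only [eliminant, map_mul, map_add, map_sub, map_pow, map_ofNat, rename_X,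
    Fin.succ_zero_eq_one, Fin.succ_one_eq_two] using hrename

end Coordinates

section Homogeneity

variable {σ R : Type*} [CommSemiring R]

theorem isHomogeneous_X_pow_add_X_pow (i j : σ) (n : ℕ) :
    (X i ^ n + X j ^ n : MvPolynomial σ R).IsHomogeneous n :=
  (isHomogeneous_X_pow i n).add (isHomogeneous_X_pow j n)

theorem isHomogeneous_X_sq_mul_X_sq_add_X_pow (i j k : σ) :
    (X i ^ 2 * X j ^ 2 + X k ^ 4 : MvPolynomial σ R).IsHomogeneous 4 :=
  ((isHomogeneous_X_pow i 2).mul (isHomogeneous_X_pow j 2)).add (isHomogeneous_X_pow k 4)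

theorem isHomogeneous_pullbackZT_X (i j k : σ) :
    (pullbackZT (X i) (X j) (X k) : MvPolynomial σ R).IsHomogeneous 12 :=
  ((isHomogeneous_X_pow i 4).mul ((isHomogeneous_X_pow_add_X_pow i j 2).pow 4)).add
    ((isHomogeneous_X_pow j 4).mul ((isHomogeneous_X_pow_add_X_pow i k 2).pow 4))

theorem isHomogeneous_reducedPullbackZY_X (i j k : σ) :
    (reducedPullbackZY (X i) (X j) (X k) : MvPolynomial σ R).IsHomogeneous 8 :=
  ((isHomogeneous_X_pow i 4).mul ((isHomogeneous_X_pow_add_X_pow i j 2).pow 2)).add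
    ((isHomogeneous_X_sq_mul_X_sq_add_X_pow j i k).pow 2)

end Homogeneity

/-- The components of `R̂_phys ∘ R̂_phys` with the common factor `(Z² + T²)⁴` removed. -/
noncomputable def RphysSqReduced : Fin 3 → MvPolynomial (Fin 3) ℂ :=
  ![X 0 ^ 4 * pullbackZT (X 0) (X 1) (X 2) ^ 2,
    X 1 ^ 4 * (X 0 ^ 2 + X 2 ^ 2) ^ 4 * reducedPullbackZY (X 0) (X 1) (X 2) ^ 2,
    pullbackZT (X 0) (X 1) (X 2) *
      (X 0 ^ 4 * X 1 ^ 4 * (X 0 ^ 2 + X 2 ^ 2) ^ 4 + (X 1 ^ 2 * X 0 ^ 2 + X 2 ^ 4) ^ 4)]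

theorem RphysSq_eq_mul_RphysSqReduced (i : Fin 3) :
    RphysSq i = ((X 0 : MvPolynomial (Fin 3) ℂ) ^ 2 + X 1 ^ 2) ^ 4 * RphysSqReduced i := by
  fin_cases i <;>
    simp only [RphysSq, RphysComp, RphysSqReduced, pullbackZT, reducedPullbackZY, map_mul, map_add,
      map_pow, bind₁_X_right, Fin.zero_eta, Fin.mk_one, Fin.reduceFinMk, Matrix.cons_val] <;>
    ring

theorem isHomogeneous_RphysSqReduced (i : Fin 3) : (RphysSqReduced i).IsHomogeneous 28 := by
  have hD : (pullbackZT (X 0) (X 1) (X 2) : MvPolynomial (Fin 3) ℂ).IsHomogeneous 12 :=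
    isHomogeneous_pullbackZT_X 0 1 2
  have hE : (reducedPullbackZY (X 0) (X 1) (X 2) : MvPolynomial (Fin 3) ℂ).IsHomogeneous 8 :=
    isHomogeneous_reducedPullbackZY_X 0 1 2
  have hB := (isHomogeneous_X_pow_add_X_pow (R := ℂ) (0 : Fin 3) 2 2).pow 4
  have hC := (isHomogeneous_X_sq_mul_X_sq_add_X_pow (R := ℂ) (1 : Fin 3) 0 2).pow 4
  fin_cases i
  · exact (isHomogeneous_X_pow 0 4).mul (hD.pow 2)
  · exact ((isHomogeneous_X_pow 1 4).mul hB).mul (hE.pow 2)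
  · exact hD.mul ((((isHomogeneous_X_pow 0 4).mul (isHomogeneous_X_pow 1 4)).mul hB).add hC)

theorem isRelPrime_RphysSqReduced_zero_one :
    IsRelPrime (RphysSqReduced 0) (RphysSqReduced 1) :=
  isRelPrime_mul_pullbackZT_mul_reducedPullbackZY (isRelPrime_X_zero_X_succ 0)
    (isRelPrime_X_zero_X_succ 1) (isRelPrime_X_sq_add_X_sq zero_ne_one)
    isRelPrime_reducedPullbackZY_eliminant ..

/-- **`R_phys` is not algebraically stable.**  The polynomial `(Z²+T²)⁴` divides each of
the three components of `R̂_phys ∘ R̂_phys`, and the quotient polynomials are homogeneous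
of degree `28` with no nonconstant common factor.  Hence `deg (R_phys²) = 28 < 36 =
(deg R_phys)²`. -/
theorem Rphys_not_algebraically_stable :
    (∀ i, ((X 0 : MvPolynomial (Fin 3) ℂ) ^ 2 + X 1 ^ 2) ^ 4 ∣ RphysSq i) ∧
    ∀ q : Fin 3 → MvPolynomial (Fin 3) ℂ,
      (∀ i, RphysSq i = ((X 0 : MvPolynomial (Fin 3) ℂ) ^ 2 + X 1 ^ 2) ^ 4 * q i) →
      (∀ i, (q i).IsHomogeneous 28) ∧
      ∀ d : MvPolynomial (Fin 3) ℂ, (∀ i, d ∣ q i) → IsUnit d := by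
  refine ⟨fun i => ⟨_, RphysSq_eq_mul_RphysSqReduced i⟩, fun q hq => ?_⟩
  have hA : ((X 0 : MvPolynomial (Fin 3) ℂ) ^ 2 + X 1 ^ 2) ^ 4 ≠ 0 :=
    pow_ne_zero 4 (X_sq_add_X_sq_ne_zero zero_ne_one)
  have hq_eq : q = RphysSqReduced := by
    funext i
    exact mul_left_cancel₀ hA ((hq i).symm.trans (RphysSq_eq_mul_RphysSqReduced i))
  subst hq_eq
  exact ⟨isHomogeneous_RphysSqReduced,
    fun d hd => isRelPrime_RphysSqReduced_zero_one (hd 0) (hd 1)⟩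
end

section
/- For every D > 0 there exists λ ∈ (0,1) with the following property: whenever I and J are bounded nonempty open intervals of ℝ, φ is a real Möbius transformation that is defined at every point of I and maps I into J, and the hyperbolic diameter of φ(I) in J is at most D (i.e., dist_J(φ(x), φ(y)) ≤ D for all x, y ∈ I), then dist_J(φ(x), φ(y)) ≤ λ · dist_I(x, y) for all x, y ∈ I. (Schwarz Lemma for projective maps.) -/
/-- The hyperbolic distance between `x` and `y` in the bounded interval `(a, b)`:
`dist_{(a,b)}(x,y) = |log( ((y−a)(b−x)) / ((x−a)(b−y)) )|`. -/
noncomputable def hypDist (a b x y : ℝ) : ℝ :=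
  |Real.log (((y - a) * (b - x)) / ((x - a) * (b - y)))|

/-!
In the coordinate `log ((x - a) / (b - x))`, which is an isometry from the hyperbolic interval
`(a, b)` onto `ℝ`, a Möbius map between intervals becomes
`w ↦ log ((α * exp w + β) / (γ * exp w + δ))` with nonnegative coefficients.
Letting `x` and `y` tend to opposite endpoints of `I`, the bound `D` on the diameter of the image
says that `α * δ` and `β * γ` differ by a factor of at most `exp D`. By Cauchy–Schwarz the
derivative of the map is then at most `tanh (D / 4)`, the Birkhoff contraction coefficient.
-/

open Real Set

/-- The Möbius transformation `x ↦ (p * x + q) / (r * x + s)` with arbitrary real coefficients,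
degenerate ones included; it takes the junk value `0` at its pole. -/
noncomputable def mobius (p q r s x : ℝ) : ℝ :=
  (p * x + q) / (r * x + s)

lemma mobius_neg (p q r s : ℝ) : mobius (-p) (-q) (-r) (-s) = mobius p q r s := by
  ext x
  rw [mobius, mobius, ← neg_div_neg_eq (p * x + q), neg_add, neg_add]
  simp only [neg_mul]

/-- The hyperbolic coordinate on `(a, b)`, which identifies the interval isometrically with `ℝ`;
`a` is sent to `-∞` and `b` to `+∞`. It is meaningful only for `x ∈ (a, b)`. -/
noncomputable def hypCoord (a b x : ℝ) : ℝ :=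
  log ((x - a) / (b - x))

section Coordinates

variable {a b x y : ℝ}

lemma hypDist_eq_abs_hypCoord_sub (hx : x ∈ Ioo a b) (hy : y ∈ Ioo a b) :
    hypDist a b x y = |hypCoord a b y - hypCoord a b x| := by
  have hxa := sub_pos.2 hx.1
  have hxb := sub_pos.2 hx.2
  have hya := sub_pos.2 hy.1
  have hyb := sub_pos.2 hy.2
  rw [hypDist, hypCoord, hypCoord, ← log_div (by positivity) (by positivity), div_div_div_eq,
    mul_comm (b - y)]

lemma exp_hypCoord (hx : x ∈ Ioo a b) : exp (hypCoord a b x) = (x - a) / (b - x) :=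
  exp_log (div_pos (sub_pos.2 hx.1) (sub_pos.2 hx.2))

lemma mobius_eq_mobius_exp_hypCoord (hx : x ∈ Ioo a b) (p q r s : ℝ) :
    mobius p q r s x =
      mobius (p * b + q) (p * a + q) (r * b + s) (r * a + s) (exp (hypCoord a b x)) := by
  have hba : b - a ≠ 0 := (sub_pos.2 (hx.1.trans hx.2)).ne'
  have hbx : b - x ≠ 0 := (sub_pos.2 hx.2).ne'
  have interpolate (m n : ℝ) :
      (m * b + n) * ((x - a) / (b - x)) + (m * a + n) = (b - a) / (b - x) * (m * x + n) := by
    field_simp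
    ring
  rw [exp_hypCoord hx, mobius, mobius, interpolate, interpolate,
    mul_div_mul_left _ _ (div_ne_zero hba hbx)]

lemma hypCoord_mobius {r s : ℝ} (hx : r * x + s ≠ 0) (c d p q : ℝ) :
    hypCoord c d (mobius p q r s x) =
      log (mobius (p - c * r) (q - c * s) (d * r - p) (d * s - q) x) := by
  have hnum : mobius p q r s x - c = ((p - c * r) * x + (q - c * s)) / (r * x + s) := by
    rw [mobius, div_sub' hx]
    ring
  have hden : d - mobius p q r s x = ((d * r - p) * x + (d * s - q)) / (r * x + s) := by
    rw [mobius, sub_div' hx]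
    ring
  rw [hypCoord, hnum, hden, div_div_div_cancel_right₀ hx, mobius]

end Coordinates

lemma abs_sub_le_tanh_mul_add {m n t : ℝ} (hmn : m ≤ exp (2 * t) * n)
    (hnm : n ≤ exp (2 * t) * m) : |m - n| ≤ tanh t * (m + n) := by
  have hsq : exp (2 * t) = exp t * exp t := by rw [two_mul, exp_add]
  have htanh : tanh t = (exp (2 * t) - 1) / (exp (2 * t) + 1) := by
    rw [tanh_eq, exp_neg, hsq]
    field_simp
  rw [htanh, div_mul_eq_mul_div, le_div_iff₀ (by positivity)]
  rcases abs_cases (m - n) with ⟨habs, -⟩ | ⟨habs, -⟩ <;> rw [habs] <;> linarith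

lemma sqrt_le_exp_half_mul_sqrt {m n D : ℝ} (h : m ≤ exp D * n) :
    √m ≤ exp (D / 2) * √n := by
  rw [exp_half, ← sqrt_mul (exp_pos D).le]
  exact sqrt_le_sqrt h

lemma abs_sub_eq_abs_sqrt_sub_mul {m n : ℝ} (hm : 0 ≤ m) (hn : 0 ≤ n) :
    |m - n| = |√m - √n| * (√m + √n) :=
  calc |m - n| = |√m ^ 2 - √n ^ 2| := by rw [sq_sqrt hm, sq_sqrt hn]
    _ = |√m - √n| * (√m + √n) := by
      rw [sq_sub_sq, abs_mul, abs_of_nonneg (by positivity : 0 ≤ √m + √n), mul_comm]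

section ExponentialCoordinate

variable {α β γ δ D : ℝ}

lemma sq_sqrt_mul_add_sqrt_mul_le (hα : 0 ≤ α) (hβ : 0 ≤ β) (hγ : 0 ≤ γ) (hδ : 0 ≤ δ) :
    (√(α * δ) + √(β * γ)) ^ 2 ≤ (α + β) * (γ + δ) := by
  have hcross : 2 * √(α * δ) * √(β * γ) ≤ α * γ + β * δ :=
    calc 2 * √(α * δ) * √(β * γ) = 2 * √(α * γ) * √(β * δ) := by
          rw [mul_assoc, mul_assoc, ← sqrt_mul (by positivity), ← sqrt_mul (by positivity)]
          congr 2
          ring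
      _ ≤ √(α * γ) ^ 2 + √(β * δ) ^ 2 := two_mul_le_add_sq _ _
      _ = α * γ + β * δ := by rw [sq_sqrt (by positivity), sq_sqrt (by positivity)]
  calc (√(α * δ) + √(β * γ)) ^ 2
      = α * δ + β * γ + 2 * √(α * δ) * √(β * γ) := by
        rw [add_sq, sq_sqrt (by positivity), sq_sqrt (by positivity)]
        ring
    _ ≤ (α + β) * (γ + δ) := by linarith

lemma abs_det_mul_le_tanh_mul (hα : 0 ≤ α) (hβ : 0 ≤ β) (hγ : 0 ≤ γ) (hδ : 0 ≤ δ) (hD : 0 ≤ D)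
    (hle : α * δ ≤ exp D * (β * γ)) (hge : β * γ ≤ exp D * (α * δ)) {u : ℝ} (hu : 0 ≤ u) :
    |α * δ - β * γ| * u ≤ tanh (D / 4) * ((α * u + β) * (γ * u + δ)) := by
  have hhalf : D / 2 = 2 * (D / 4) := by ring
  have hsqrt : |√(α * δ) - √(β * γ)| ≤ tanh (D / 4) * (√(α * δ) + √(β * γ)) :=
    abs_sub_le_tanh_mul_add (hhalf ▸ sqrt_le_exp_half_mul_sqrt hle)
      (hhalf ▸ sqrt_le_exp_half_mul_sqrt hge)
  have hfactor : |α * δ - β * γ| = |√(α * δ) - √(β * γ)| * (√(α * δ) + √(β * γ)) :=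
    abs_sub_eq_abs_sqrt_sub_mul (mul_nonneg hα hδ) (mul_nonneg hβ hγ)
  have hcauchy : (√(α * δ) + √(β * γ)) ^ 2 * u ≤ (α * u + β) * (γ * u + δ) := by
    have h := sq_sqrt_mul_add_sqrt_mul_le (mul_nonneg hα hu) hβ (mul_nonneg hγ hu) hδ
    rwa [mul_right_comm α, ← mul_assoc, sqrt_mul (mul_nonneg hα hδ), sqrt_mul (mul_nonneg hβ hγ),
      ← add_mul, mul_pow, sq_sqrt hu] at h
  have htanh : 0 ≤ tanh (D / 4) := by
    rw [tanh_eq_sinh_div_cosh]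
    exact div_nonneg (sinh_nonneg_iff.2 (by positivity)) (cosh_pos _).le
  calc |α * δ - β * γ| * u
      ≤ tanh (D / 4) * (√(α * δ) + √(β * γ)) * (√(α * δ) + √(β * γ)) * u := by
        rw [hfactor]
        gcongr
    _ = tanh (D / 4) * ((√(α * δ) + √(β * γ)) ^ 2 * u) := by ring
    _ ≤ tanh (D / 4) * ((α * u + β) * (γ * u + δ)) := by gcongr

lemma hasDerivAt_log_mobius_exp {w : ℝ} (hnum : α * exp w + β ≠ 0) (hden : γ * exp w + δ ≠ 0) :
    HasDerivAt (fun w ↦ log (mobius α β γ δ (exp w)))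
      ((α * δ - β * γ) * exp w / ((α * exp w + β) * (γ * exp w + δ))) w := by
  have hquot := (((hasDerivAt_exp w).const_mul α).add_const β).fun_div
    (((hasDerivAt_exp w).const_mul γ).add_const δ) hden
  refine (hquot.log (div_ne_zero hnum hden)).congr_deriv ?_
  rw [div_div_div_eq, div_eq_div_iff (by positivity) (by positivity)]
  ring

lemma mul_add_pos_of_add_pos {u : ℝ} (hα : 0 ≤ α) (hβ : 0 ≤ β) (hαβ : 0 < α + β) (hu : 0 < u) :
    0 < α * u + β := by
  rcases hα.eq_or_lt with rfl | hα
  · linarith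
  · positivity

lemma abs_log_mobius_exp_sub_le (hα : 0 ≤ α) (hβ : 0 ≤ β) (hγ : 0 ≤ γ) (hδ : 0 ≤ δ) (hD : 0 ≤ D)
    (hαβ : 0 < α + β) (hγδ : 0 < γ + δ)
    (hle : α * δ ≤ exp D * (β * γ)) (hge : β * γ ≤ exp D * (α * δ)) (v w : ℝ) :
    |log (mobius α β γ δ (exp w)) - log (mobius α β γ δ (exp v))| ≤ tanh (D / 4) * |w - v| := by
  have hnum (w : ℝ) : 0 < α * exp w + β := mul_add_pos_of_add_pos hα hβ hαβ (exp_pos w)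
  have hden (w : ℝ) : 0 < γ * exp w + δ := mul_add_pos_of_add_pos hγ hδ hγδ (exp_pos w)
  refine convex_univ.norm_image_sub_le_of_norm_hasDerivWithin_le
    (fun w _ ↦ (hasDerivAt_log_mobius_exp (hnum w).ne' (hden w).ne').hasDerivWithinAt)
    (fun w _ ↦ ?_) (mem_univ v) (mem_univ w)
  have hprod := mul_pos (hnum w) (hden w)
  rw [norm_eq_abs, abs_div, abs_mul, abs_of_pos (exp_pos w), abs_of_pos hprod, div_le_iff₀ hprod]
  exact abs_det_mul_le_tanh_mul hα hβ hγ hδ hD hle hge (exp_pos w).le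

end ExponentialCoordinate

lemma mul_le_exp_mul_of_log_div_sub_log_div_le {m n m' n' D : ℝ} (hm : 0 < m) (hn : 0 < n)
    (hm' : 0 < m') (hn' : 0 < n') (h : log (m' / n') - log (m / n) ≤ D) :
    m' * n ≤ exp D * (m * n') := by
  rw [← log_div (by positivity) (by positivity), log_le_iff_le_exp (by positivity),
    div_div_div_eq, div_le_iff₀ (by positivity), mul_comm n' m] at h
  exact h

section Interval

variable {a b c d p q r s D x y : ℝ}

lemma affine_nonneg_of_pos_on_Ioo (hab : a < b) (hpos : ∀ x ∈ Ioo a b, 0 < p * x + q)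
    (hx : x ∈ Icc a b) : 0 ≤ p * x + q := by
  rw [← closure_Ioo hab.ne] at hx
  exact le_on_closure (fun x hx ↦ (hpos x hx).le) (by fun_prop) (by fun_prop) hx

lemma affine_endpoint_add_pos (hab : a < b) (hpos : ∀ x ∈ Ioo a b, 0 < p * x + q) :
    0 < p * b + q + (p * a + q) := by
  have hmid := hpos ((a + b) / 2) ⟨by linarith, by linarith⟩
  linarith

lemma affine_mul_le_exp_mul_of_log_mobius_sub_le (hab : a < b)
    (hnum : ∀ x ∈ Ioo a b, 0 < p * x + q) (hden : ∀ x ∈ Ioo a b, 0 < r * x + s)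
    (hdiam : ∀ x ∈ Ioo a b, ∀ y ∈ Ioo a b,
      |log (mobius p q r s y) - log (mobius p q r s x)| ≤ D)
    (hx : x ∈ Icc a b) (hy : y ∈ Icc a b) :
    (p * y + q) * (r * x + s) ≤ exp D * ((p * x + q) * (r * y + s)) := by
  have hxy : (x, y) ∈ closure (Ioo a b ×ˢ Ioo a b) := by
    rw [closure_prod_eq, closure_Ioo hab.ne]
    exact ⟨hx, hy⟩
  refine le_on_closure (f := fun z : ℝ × ℝ ↦ (p * z.2 + q) * (r * z.1 + s))
    (g := fun z ↦ exp D * ((p * z.1 + q) * (r * z.2 + s))) ?_ (by fun_prop) (by fun_prop) hxy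
  rintro ⟨x, y⟩ ⟨hx, hy⟩
  exact mul_le_exp_mul_of_log_div_sub_log_div_le (hnum x hx) (hden x hx) (hnum y hy) (hden y hy)
    (le_of_abs_le (hdiam x hx y hy))

lemma abs_log_mobius_sub_le_tanh_mul_hypDist (hnum : ∀ x ∈ Ioo a b, 0 < p * x + q)
    (hden : ∀ x ∈ Ioo a b, 0 < r * x + s)
    (hdiam : ∀ x ∈ Ioo a b, ∀ y ∈ Ioo a b,
      |log (mobius p q r s y) - log (mobius p q r s x)| ≤ D)
    (hx : x ∈ Ioo a b) (hy : y ∈ Ioo a b) :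
    |log (mobius p q r s y) - log (mobius p q r s x)| ≤ tanh (D / 4) * hypDist a b x y := by
  have hab : a < b := hx.1.trans hx.2
  have ha : a ∈ Icc a b := left_mem_Icc.2 hab.le
  have hb : b ∈ Icc a b := right_mem_Icc.2 hab.le
  have hD : 0 ≤ D := (abs_nonneg _).trans (hdiam x hx x hx)
  rw [hypDist_eq_abs_hypCoord_sub hx hy, mobius_eq_mobius_exp_hypCoord hx,
    mobius_eq_mobius_exp_hypCoord hy]
  exact abs_log_mobius_exp_sub_le
    (affine_nonneg_of_pos_on_Ioo hab hnum hb) (affine_nonneg_of_pos_on_Ioo hab hnum ha)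
    (affine_nonneg_of_pos_on_Ioo hab hden hb) (affine_nonneg_of_pos_on_Ioo hab hden ha) hD
    (affine_endpoint_add_pos hab hnum) (affine_endpoint_add_pos hab hden)
    (affine_mul_le_exp_mul_of_log_mobius_sub_le hab hnum hden hdiam ha hb)
    (affine_mul_le_exp_mul_of_log_mobius_sub_le hab hnum hden hdiam hb ha) _ _

lemma hypDist_mobius_le_of_denom_pos (hpos : ∀ x ∈ Ioo a b, 0 < r * x + s)
    (hmap : MapsTo (mobius p q r s) (Ioo a b) (Ioo c d))
    (hdiam : ∀ x ∈ Ioo a b, ∀ y ∈ Ioo a b,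
      hypDist c d (mobius p q r s x) (mobius p q r s y) ≤ D)
    (hx : x ∈ Ioo a b) (hy : y ∈ Ioo a b) :
    hypDist c d (mobius p q r s x) (mobius p q r s y) ≤ tanh (D / 4) * hypDist a b x y := by
  have hdist {x y : ℝ} (hx : x ∈ Ioo a b) (hy : y ∈ Ioo a b) :
      hypDist c d (mobius p q r s x) (mobius p q r s y) =
        |log (mobius (p - c * r) (q - c * s) (d * r - p) (d * s - q) y) -
          log (mobius (p - c * r) (q - c * s) (d * r - p) (d * s - q) x)| := by
    rw [hypDist_eq_abs_hypCoord_sub (hmap hx) (hmap hy), hypCoord_mobius (hpos x hx).ne',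
      hypCoord_mobius (hpos y hy).ne']
  rw [hdist hx hy]
  refine abs_log_mobius_sub_le_tanh_mul_hypDist (fun x hx ↦ ?_) (fun x hx ↦ ?_)
    (fun x hx y hy ↦ (hdist hx hy).symm.trans_le (hdiam x hx y hy)) hx hy
  · linarith [(lt_div_iff₀ (hpos x hx)).1 (hmap hx).1]
  · linarith [(div_lt_iff₀ (hpos x hx)).1 (hmap hx).2]

theorem hypDist_mobius_le_tanh_mul_hypDist (hne : ∀ x ∈ Ioo a b, r * x + s ≠ 0)
    (hmap : MapsTo (mobius p q r s) (Ioo a b) (Ioo c d))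
    (hdiam : ∀ x ∈ Ioo a b, ∀ y ∈ Ioo a b,
      hypDist c d (mobius p q r s x) (mobius p q r s y) ≤ D)
    (hx : x ∈ Ioo a b) (hy : y ∈ Ioo a b) :
    hypDist c d (mobius p q r s x) (mobius p q r s y) ≤ tanh (D / 4) * hypDist a b x y := by
  rcases isPreconnected_Ioo.mapsTo_Ioi_or_Iio (by fun_prop) hne with hpos | hneg
  · exact hypDist_mobius_le_of_denom_pos hpos hmap hdiam hx hy
  · rw [← mobius_neg] at hmap hdiam ⊢
    refine hypDist_mobius_le_of_denom_pos (fun x hx ↦ ?_) hmap hdiam hx hy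
    linarith [mem_Iio.1 (hneg hx)]

end Interval

/-- **Schwarz Lemma for projective maps.**  For every `D > 0` there is `λ ∈ (0,1)` such
that: whenever `I = (a,b)` and `J = (c,d)` are bounded nonempty open intervals, `φ` is a
real Möbius transformation defined at every point of `I` and mapping `I` into `J`, and
the hyperbolic diameter of `φ(I)` in `J` is at most `D`, then
`dist_J(φ(x), φ(y)) ≤ λ · dist_I(x, y)` for all `x, y ∈ I`. -/
theorem schwarz_lemma_projective (D : ℝ) (hD : 0 < D) :
    ∃ l : ℝ, 0 < l ∧ l < 1 ∧
      ∀ a b c d p q r s : ℝ, a < b → c < d → p * s - q * r ≠ 0 →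
        (∀ x ∈ Set.Ioo a b, r * x + s ≠ 0) →
        (∀ x ∈ Set.Ioo a b, (p * x + q) / (r * x + s) ∈ Set.Ioo c d) →
        (∀ x ∈ Set.Ioo a b, ∀ y ∈ Set.Ioo a b,
          hypDist c d ((p * x + q) / (r * x + s)) ((p * y + q) / (r * y + s)) ≤ D) →
        ∀ x ∈ Set.Ioo a b, ∀ y ∈ Set.Ioo a b,
          hypDist c d ((p * x + q) / (r * x + s)) ((p * y + q) / (r * y + s)) ≤
            l * hypDist a b x y := by
  have htanh : 0 < tanh (D / 4) := by
    rw [tanh_eq_sinh_div_cosh]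
    exact div_pos (sinh_pos_iff.2 (by positivity)) (cosh_pos _)
  refine ⟨tanh (D / 4), htanh, tanh_lt_one _, ?_⟩
  intro a b c d p q r s _ _ _ hne hmap hdiam x hx y hy
  exact hypDist_mobius_le_tanh_mul_hypDist hne hmap hdiam hx hy
end

section
/- Let 0 < 𝚝 < 1, let n ≥ 1 be an integer, and let k ∈ {0,1,…,n−1}. Set φ_k = arccos( √(1−𝚝⁴) · cos(π(k+1/2)/n) ). Then for z = exp(iφ_k) and for z = exp(−iφ_k) one has trace(W(z)^n) = 0; that is, these 2n points on the unit circle are Lee–Yang zeros of the periodic one-dimensional Ising chain of length n. -/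
/-- The transfer matrix of the one-dimensional Ising model:
`W(z)` has rows `(1/(𝚝z), 𝚝)` and `(𝚝, z/𝚝)`. -/
noncomputable def transferMatrix (t : ℝ) (z : ℂ) : Matrix (Fin 2) (Fin 2) ℂ :=
  !![1 / ((t : ℂ) * z), (t : ℂ); (t : ℂ), z / (t : ℂ)]

/-!
The trace of `W ^ n` is `a ^ n + b ^ n`, where `a` and `b` are the eigenvalues of `W`. For
`z = exp (i φ)` the matrix `W` has trace `2 cos φ / t` and determinant `(1 - t ^ 4) / t ^ 2`, so
writing `cos φ = s cos θ` with `s ^ 2 = 1 - t ^ 4` makes its eigenvalues `(s / t) exp (± i θ)` and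
the trace of `W ^ n` equal to `2 (s / t) ^ n cos (n θ)`. The angles `θ = π (k + 1 / 2) / n` are
zeros of `cos (n θ)`.
-/

section TwoByTwo

variable {R : Type*} [CommRing R]

theorem sq_fin_two_eq_trace_smul_sub_det_smul_one (M : Matrix (Fin 2) (Fin 2) R) :
    M ^ 2 = M.trace • M - M.det • 1 := by
  nontriviality R
  have cayley_hamilton := M.aeval_self_charpoly
  simp only [M.charpoly_fin_two, map_add, map_sub, map_mul, map_pow, Polynomial.aeval_X,
    Polynomial.aeval_C, Algebra.algebraMap_eq_smul_one, smul_one_mul] at cayley_hamilton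
  refine sub_eq_zero.mp (Eq.trans ?_ cayley_hamilton)
  abel

theorem trace_pow_add_two_fin_two (M : Matrix (Fin 2) (Fin 2) R) (n : ℕ) :
    (M ^ (n + 2)).trace = M.trace * (M ^ (n + 1)).trace - M.det * (M ^ n).trace := by
  rw [pow_add, sq_fin_two_eq_trace_smul_sub_det_smul_one, mul_sub, mul_smul_comm, mul_smul_comm,
    mul_one, ← pow_succ, Matrix.trace_sub, Matrix.trace_smul, Matrix.trace_smul, smul_eq_mul,
    smul_eq_mul]

theorem trace_pow_fin_two_eq_pow_add_pow {M : Matrix (Fin 2) (Fin 2) R} {a b : R}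
    (htrace : M.trace = a + b) (hdet : M.det = a * b) (n : ℕ) :
    (M ^ n).trace = a ^ n + b ^ n := by
  induction n using Nat.twoStepInduction with
  | zero => simp [one_add_one_eq_two]
  | one => simpa using htrace
  | more n ih ih_succ =>
    rw [trace_pow_add_two_fin_two, ih, ih_succ, htrace, hdet]
    ring

open Complex in
theorem trace_pow_fin_two_eq_two_mul_pow_mul_cos {M : Matrix (Fin 2) (Fin 2) ℂ} {r θ : ℂ}
    (htrace : M.trace = 2 * r * cos θ) (hdet : M.det = r ^ 2) (n : ℕ) :
    (M ^ n).trace = 2 * r ^ n * cos (n * θ) := by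
  have trace_eq_add : M.trace = r * exp (θ * I) + r * exp (-θ * I) := by
    rw [htrace, ← mul_add, ← two_cos]
    ring
  have det_eq_mul : M.det = r * exp (θ * I) * (r * exp (-θ * I)) := by
    rw [hdet, mul_mul_mul_comm, ← exp_add, neg_mul, add_neg_cancel, exp_zero, mul_one, sq]
  calc (M ^ n).trace
      = (r * exp (θ * I)) ^ n + (r * exp (-θ * I)) ^ n :=
        trace_pow_fin_two_eq_pow_add_pow trace_eq_add det_eq_mul n
    _ = r ^ n * (exp (n * θ * I) + exp (-(n * θ) * I)) := by
        rw [mul_pow, mul_pow, ← mul_add, ← exp_nat_mul, ← exp_nat_mul]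
        ring_nf
    _ = 2 * r ^ n * cos (n * θ) := by
        rw [← two_cos]
        ring

end TwoByTwo

theorem cos_nat_mul_pi_mul_add_half_div {n : ℕ} (hn : n ≠ 0) (k : ℤ) :
    Real.cos (n * (Real.pi * (k + 1 / 2) / n)) = 0 := by
  refine Real.cos_eq_zero_iff.mpr ⟨k, ?_⟩
  field_simp

theorem cos_arccos_sqrt_one_sub_mul_cos {x : ℝ} (hx : 0 ≤ x) (θ : ℝ) :
    Real.cos (Real.arccos (√(1 - x) * Real.cos θ)) = √(1 - x) * Real.cos θ := by
  have sqrt_le_one : √(1 - x) ≤ 1 := Real.sqrt_le_one.mpr (by linarith)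
  have abs_le_one : |√(1 - x) * Real.cos θ| ≤ 1 := by
    rw [abs_mul, abs_of_nonneg (Real.sqrt_nonneg _)]
    exact mul_le_one₀ sqrt_le_one (abs_nonneg _) (Real.abs_cos_le_one θ)
  exact Real.cos_arccos (abs_le.mp abs_le_one).1 (abs_le.mp abs_le_one).2

section TransferMatrix

open Complex

theorem trace_transferMatrix_exp (t : ℝ) (φ : ℂ) :
    (transferMatrix t (exp (I * φ))).trace = 2 * cos φ / t := by
  rw [transferMatrix, Matrix.trace_fin_two_of, two_cos, neg_mul, exp_neg, mul_comm φ]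
  ring

theorem det_transferMatrix {t : ℝ} (ht : t ≠ 0) {z : ℂ} (hz : z ≠ 0) :
    (transferMatrix t z).det = (1 - (t : ℂ) ^ 4) / (t : ℂ) ^ 2 := by
  have ht' : (t : ℂ) ≠ 0 := ofReal_ne_zero.mpr ht
  rw [transferMatrix, Matrix.det_fin_two_of]
  field_simp

theorem trace_transferMatrix_exp_pow {t : ℝ} (ht : t ≠ 0) {s φ θ : ℂ}
    (hs : s ^ 2 = 1 - (t : ℂ) ^ 4) (hφ : cos φ = s * cos θ) (n : ℕ) :
    (transferMatrix t (exp (I * φ)) ^ n).trace = 2 * (s / t) ^ n * cos (n * θ) := by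
  apply trace_pow_fin_two_eq_two_mul_pow_mul_cos
  · rw [trace_transferMatrix_exp, hφ]
    ring
  · rw [det_transferMatrix ht (exp_ne_zero _), div_pow, hs]

theorem oneD_ising_leeYang_zeros_general {t : ℝ} (ht : t ≠ 0) {s φ θ : ℂ} {n : ℕ}
    (hs : s ^ 2 = 1 - (t : ℂ) ^ 4) (hφ : cos φ = s * cos θ) (hθ : cos (n * θ) = 0) :
    Matrix.trace (transferMatrix t (exp (I * φ)) ^ n) = 0 ∧
    Matrix.trace (transferMatrix t (exp (-I * φ)) ^ n) = 0 := by
  constructor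
  · rw [trace_transferMatrix_exp_pow ht hs hφ, hθ, mul_zero]
  · rw [neg_mul_comm, trace_transferMatrix_exp_pow ht hs ((cos_neg φ).trans hφ), hθ, mul_zero]

end TransferMatrix

/-- **Lee–Yang zeros of the periodic 1D Ising chain.**  For `0 < 𝚝 < 1`, `n ≥ 1` and
`0 ≤ k < n`, set `φ_k = arccos(√(1−𝚝⁴)·cos(π(k+1/2)/n))`.  Then
`trace(W(e^{iφ_k})^n) = 0 = trace(W(e^{−iφ_k})^n)`: these `2n` points of the unit circle
are zeros of the partition function of the cyclic chain of length `n`. -/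
theorem oneD_ising_leeYang_zeros (t : ℝ) (ht0 : 0 < t) (ht1 : t < 1)
    (n : ℕ) (hn : 1 ≤ n) (k : ℕ) (hk : k < n) (φ : ℝ)
    (hφ : φ = Real.arccos (Real.sqrt (1 - t ^ 4) *
      Real.cos (Real.pi * ((k : ℝ) + 1 / 2) / (n : ℝ)))) :
    Matrix.trace (transferMatrix t (Complex.exp (Complex.I * (φ : ℂ))) ^ n) = 0 ∧
    Matrix.trace (transferMatrix t (Complex.exp (-Complex.I * (φ : ℂ))) ^ n) = 0 := by
  subst hφ
  have hs : √(1 - t ^ 4) ^ 2 = 1 - t ^ 4 :=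
    Real.sq_sqrt (sub_nonneg.mpr (pow_le_one₀ ht0.le ht1.le))
  exact oneD_ising_leeYang_zeros_general (s := (√(1 - t ^ 4) : ℝ))
    (θ := (Real.pi * (k + 1 / 2) / n : ℝ)) ht0.ne' (mod_cast hs)
    (mod_cast cos_arccos_sqrt_one_sub_mul_cos (pow_nonneg ht0.le 4) _)
    (mod_cast cos_nat_mul_pi_mul_add_half_div (Nat.one_le_iff_ne_zero.mp hn) k)
end

section
/- The map g has exactly one fixed point t_c in the open interval (0,1); this fixed point is repelling, i.e., g'(t_c) > 1. Moreover, for every t ∈ (0, t_c) the iterates g^n(t) converge to 0 as n → ∞, and for every t ∈ (t_c, 1) the iterates g^n(t) converge to 1. -/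
/-- The restriction of the renormalization of the diamond hierarchical lattice to the
invariant line `z = 1`: `g(t) = (2t/(1+t²))²`. -/
noncomputable def gmap (t : ℝ) : ℝ := (2 * t / (1 + t ^ 2)) ^ 2

/-!
On `(0, 1)` the sign of `g(t) - t` is the sign of the strictly increasing cubic
`t³ + t² + 3t - 1`, whose unique real root `t_c` lies in `(0, 1/2)`. Orbits starting below `t_c`
therefore decrease and orbits starting above it increase, and by continuity each of them can only
converge to the endpoint `0`, respectively `1`. The logarithmic derivative of `g` gives
`g'(t_c) = 2(1 - t_c²)/(1 + t_c²)`, which exceeds `1` because `t_c < 1/2 < 1/√3`.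
-/

open Filter Function Set Topology

section Iterate

variable {α : Type*} [ConditionallyCompleteLinearOrder α] [TopologicalSpace α] [OrderTopology α]
  {f : α → α} {a b x : α}

theorem tendsto_iterate_of_map_lt_self (hcont : ContinuousOn f (Ioo a b))
    (hlower : ∀ t ∈ Ioo a b, a < f t) (hlt : ∀ t ∈ Ioo a b, f t < t) (hx : x ∈ Ioo a b) :
    Tendsto (fun n ↦ f^[n] x) atTop (𝓝 a) := by
  have hmaps : MapsTo f (Ioo a b) (Ioo a b) :=
    fun t ht ↦ ⟨hlower t ht, (hlt t ht).trans ht.2⟩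
  have horbit (n : ℕ) : f^[n] x ∈ Ioo a b := hmaps.iterate n hx
  have hanti : Antitone fun n ↦ f^[n] x := antitone_nat_of_succ_le fun n ↦ by
    rw [iterate_succ_apply']
    exact (hlt _ (horbit n)).le
  have hbdd : BddBelow (range fun n ↦ f^[n] x) :=
    ⟨a, forall_mem_range.2 fun n ↦ (horbit n).1.le⟩
  obtain ⟨l, hl⟩ : ∃ l, Tendsto (fun n ↦ f^[n] x) atTop (𝓝 l) :=
    ⟨_, tendsto_atTop_ciInf hanti hbdd⟩
  have hal : a ≤ l := ge_of_tendsto' hl fun n ↦ (horbit n).1.le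
  have hlb : l < b := (hanti.le_of_tendsto hl 0).trans_lt hx.2
  obtain rfl | hal := hal.eq_or_lt
  · exact hl
  · have hfix : f l = l :=
      isFixedPt_of_tendsto_iterate hl (hcont.continuousAt (Ioo_mem_nhds hal hlb))
    exact absurd hfix (hlt l ⟨hal, hlb⟩).ne

theorem tendsto_iterate_of_self_lt_map (hcont : ContinuousOn f (Ioo a b))
    (hupper : ∀ t ∈ Ioo a b, f t < b) (hlt : ∀ t ∈ Ioo a b, t < f t) (hx : x ∈ Ioo a b) :
    Tendsto (fun n ↦ f^[n] x) atTop (𝓝 b) :=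
  tendsto_iterate_of_map_lt_self (α := αᵒᵈ) (a := b) (b := a)
    (hcont.mono fun _ ht ↦ ht.symm) (fun t ht ↦ hupper t ht.symm) (fun t ht ↦ hlt t ht.symm)
    hx.symm

end Iterate

/-- The cubic factor of the numerator of `gmap t - t`; its unique real root is the repelling
fixed point `t_c`. -/
def fixedPointCubic (t : ℝ) : ℝ := t ^ 3 + t ^ 2 + 3 * t - 1

theorem strictMono_fixedPointCubic : StrictMono fixedPointCubic := by
  intro s t hst
  have hquot : 0 < s ^ 2 + s * t + t ^ 2 + s + t + 3 := by
    nlinarith [sq_nonneg (s + t + 1), sq_nonneg s, sq_nonneg t]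
  have hfactor : fixedPointCubic t - fixedPointCubic s =
      (t - s) * (s ^ 2 + s * t + t ^ 2 + s + t + 3) := by
    unfold fixedPointCubic
    ring
  exact sub_pos.1 (hfactor ▸ mul_pos (sub_pos.2 hst) hquot)

theorem exists_fixedPointCubic_eq_zero : ∃ c, fixedPointCubic c = 0 := by
  have hcont : Continuous fixedPointCubic := by
    unfold fixedPointCubic
    fun_prop
  exact mem_range_of_exists_le_of_exists_ge hcont
    ⟨0, by norm_num [fixedPointCubic]⟩ ⟨1, by norm_num [fixedPointCubic]⟩

theorem mem_Ioo_of_fixedPointCubic_eq_zero {c : ℝ} (hroot : fixedPointCubic c = 0) :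
    c ∈ Ioo 0 (1 / 2) := by
  constructor <;> rw [← strictMono_fixedPointCubic.lt_iff_lt, hroot] <;>
    norm_num [fixedPointCubic]

theorem gmap_sub_self (t : ℝ) :
    gmap t - t = t * (1 - t) / (1 + t ^ 2) ^ 2 * fixedPointCubic t := by
  unfold gmap fixedPointCubic
  field_simp
  ring

theorem continuous_gmap : Continuous gmap := by
  unfold gmap
  fun_prop (disch := intro; positivity)

theorem gmap_pos {t : ℝ} (ht : t ≠ 0) : 0 < gmap t := by
  unfold gmap
  positivity

theorem one_sub_gmap (t : ℝ) : 1 - gmap t = ((1 - t ^ 2) / (1 + t ^ 2)) ^ 2 := by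
  unfold gmap
  field_simp
  ring

theorem gmap_lt_one {t : ℝ} (ht : t ^ 2 ≠ 1) : gmap t < 1 := by
  rw [← sub_pos, one_sub_gmap]
  exact sq_pos_of_ne_zero (div_ne_zero (sub_ne_zero.2 ht.symm) (by positivity))

theorem hasDerivAt_gmap (t : ℝ) :
    HasDerivAt gmap (8 * t * (1 - t ^ 2) / (1 + t ^ 2) ^ 3) t := by
  have hnum : HasDerivAt (fun x : ℝ ↦ 2 * x) 2 t := hasDerivAt_const_mul 2
  have hden : HasDerivAt (fun x : ℝ ↦ 1 + x ^ 2) (2 * t) t := by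
    simpa using (hasDerivAt_pow 2 t).const_add 1
  refine ((hnum.fun_div hden (by positivity)).fun_pow 2).congr_deriv ?_
  simp only [Nat.add_one_sub_one, pow_one, Nat.cast_ofNat]
  field_simp
  ring

theorem mul_deriv_gmap (t : ℝ) :
    t * deriv gmap t = 2 * (1 - t ^ 2) / (1 + t ^ 2) * gmap t := by
  rw [(hasDerivAt_gmap t).deriv, gmap]
  field_simp
  ring

theorem deriv_gmap_of_isFixedPt {t : ℝ} (ht : t ≠ 0) (hfix : IsFixedPt gmap t) :
    deriv gmap t = 2 * (1 - t ^ 2) / (1 + t ^ 2) := by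
  have hlog := mul_deriv_gmap t
  rw [hfix.eq, mul_comm] at hlog
  exact mul_right_cancel₀ ht hlog

theorem one_lt_deriv_gmap_iff {t : ℝ} (ht : t ≠ 0) (hfix : IsFixedPt gmap t) :
    1 < deriv gmap t ↔ 3 * t ^ 2 < 1 := by
  rw [deriv_gmap_of_isFixedPt ht hfix, one_lt_div (by positivity)]
  constructor <;> intro h <;> linarith

section UnitInterval

variable {t : ℝ}

theorem fixedPointCubic_coeff_pos (ht : t ∈ Ioo 0 1) : 0 < t * (1 - t) / (1 + t ^ 2) ^ 2 :=
  div_pos (mul_pos ht.1 (sub_pos.2 ht.2)) (by positivity)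

theorem gmap_lt_self_iff (ht : t ∈ Ioo 0 1) : gmap t < t ↔ fixedPointCubic t < 0 := by
  rw [← sub_neg, gmap_sub_self, ← neg_pos, ← mul_neg,
    mul_pos_iff_of_pos_left (fixedPointCubic_coeff_pos ht), neg_pos]

theorem self_lt_gmap_iff (ht : t ∈ Ioo 0 1) : t < gmap t ↔ 0 < fixedPointCubic t := by
  rw [← sub_pos, gmap_sub_self, mul_pos_iff_of_pos_left (fixedPointCubic_coeff_pos ht)]

theorem isFixedPt_gmap_iff (ht : t ∈ Ioo 0 1) : IsFixedPt gmap t ↔ fixedPointCubic t = 0 := by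
  rw [IsFixedPt, ← sub_eq_zero, gmap_sub_self,
    mul_eq_zero_iff_left (fixedPointCubic_coeff_pos ht).ne']

end UnitInterval

section Basins

variable {c t : ℝ}

theorem tendsto_iterate_gmap_zero (hroot : fixedPointCubic c = 0) (ht : t ∈ Ioo 0 c) :
    Tendsto (fun n ↦ gmap^[n] t) atTop (𝓝 0) := by
  have hc : c < 1 := (mem_Ioo_of_fixedPointCubic_eq_zero hroot).2.trans one_half_lt_one
  refine tendsto_iterate_of_map_lt_self continuous_gmap.continuousOn
    (fun s hs ↦ gmap_pos hs.1.ne') (fun s hs ↦ ?_) ht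
  rw [gmap_lt_self_iff ⟨hs.1, hs.2.trans hc⟩, ← hroot]
  exact strictMono_fixedPointCubic hs.2

theorem tendsto_iterate_gmap_one (hroot : fixedPointCubic c = 0) (ht : t ∈ Ioo c 1) :
    Tendsto (fun n ↦ gmap^[n] t) atTop (𝓝 1) := by
  have hc : 0 < c := (mem_Ioo_of_fixedPointCubic_eq_zero hroot).1
  refine tendsto_iterate_of_self_lt_map continuous_gmap.continuousOn
    (fun s hs ↦ gmap_lt_one ?_) (fun s hs ↦ ?_) ht
  · exact (pow_lt_one₀ (hc.trans hs.1).le hs.2 two_ne_zero).ne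
  · rw [self_lt_gmap_iff ⟨hc.trans hs.1, hs.2⟩, ← hroot]
    exact strictMono_fixedPointCubic hs.1

end Basins

/-- **Dynamics on the invariant interval.**  The map `g` has exactly one fixed point
`t_c` in `(0,1)`; it is repelling, i.e. `g'(t_c) > 1`; the iterates of every
`t ∈ (0, t_c)` converge to `0`, and the iterates of every `t ∈ (t_c, 1)` converge
to `1`. -/
theorem gmap_dynamics :
    ∃ tc : ℝ, tc ∈ Set.Ioo (0 : ℝ) 1 ∧ gmap tc = tc ∧
      (∀ t ∈ Set.Ioo (0 : ℝ) 1, gmap t = t → t = tc) ∧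
      1 < deriv gmap tc ∧
      (∀ t ∈ Set.Ioo 0 tc,
        Filter.Tendsto (fun n => gmap^[n] t) Filter.atTop (nhds 0)) ∧
      (∀ t ∈ Set.Ioo tc 1,
        Filter.Tendsto (fun n => gmap^[n] t) Filter.atTop (nhds 1)) := by
  obtain ⟨c, hroot⟩ := exists_fixedPointCubic_eq_zero
  obtain ⟨hc_pos, hc_half⟩ := mem_Ioo_of_fixedPointCubic_eq_zero hroot
  have hc : c ∈ Ioo 0 1 := ⟨hc_pos, hc_half.trans one_half_lt_one⟩
  have hfix : IsFixedPt gmap c := (isFixedPt_gmap_iff hc).2 hroot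
  refine ⟨c, hc, hfix, fun t ht hfix_t ↦ ?unique, ?repelling,
    fun _ ↦ tendsto_iterate_gmap_zero hroot, fun _ ↦ tendsto_iterate_gmap_one hroot⟩
  case unique =>
    exact strictMono_fixedPointCubic.injective
      (((isFixedPt_gmap_iff ht).1 hfix_t).trans hroot.symm)
  case repelling =>
    exact (one_lt_deriv_gmap_iff hc.1.ne' hfix).2 (by nlinarith)
end

section
/- For all φ ∈ ℝ and all t ∈ (0,1): 3 − t⁴ + 2t²·cos(2φ) − 4·t·√(1−t²)·|sin(2φ)| > 0; equivalently, 4·(1 + t²·cos 2φ ∓ t·√(1−t²)·sin 2φ) > 1 + 2t²·cos 2φ + t⁴ for both choices of sign. Hence the differential of R does not contract the angular component of any tangent vector lying in the algebraic horizontal cone at any interior point of the cylinder. -/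
/-!
Write `r = √(1 - t²)`. By Cauchy–Schwarz, `2t² cos θ - 4tr sin θ` has square at most
`(2t²)² + (4tr)² = 16t² - 12t⁴`. With `u = t²` this is compared to `(3 - u²)²`, and the difference
`(3 - u²)² - (16u - 12u²) = (u - 1)² ((u + 1)² + 8)` is positive away from `u = 1`.
Since `3 - u² > 0`, the oscillating term stays above `-(3 - t⁴)`.
-/

namespace HorizontalCone

open Real

lemma sq_mul_cos_sub_mul_sin_le (a b θ : ℝ) :
    (a * cos θ - b * sin θ) ^ 2 ≤ a ^ 2 + b ^ 2 := by
  have pythagoras :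
      (a * cos θ - b * sin θ) ^ 2 + (a * sin θ + b * cos θ) ^ 2 = a ^ 2 + b ^ 2 := by
    linear_combination (a ^ 2 + b ^ 2) * sin_sq_add_cos_sq θ
  exact pythagoras ▸ le_add_of_nonneg_right (sq_nonneg _)

lemma sixteen_mul_sub_twelve_mul_sq_lt {R : Type*} [CommRing R] [LinearOrder R]
    [IsStrictOrderedRing R] {u : R} (hu : u ≠ 1) :
    16 * u - 12 * u ^ 2 < (3 - u ^ 2) ^ 2 := by
  have factored_pos : 0 < (u - 1) ^ 2 * ((u + 1) ^ 2 + 8) :=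
    mul_pos (sq_pos_of_ne_zero (sub_ne_zero.mpr hu)) (by positivity)
  linear_combination factored_pos

lemma noncontraction_margin_pos {t : ℝ} (ht : |t| < 1) (θ : ℝ) :
    0 < 3 - t ^ 4 + 2 * t ^ 2 * cos θ - 4 * t * √(1 - t ^ 2) * sin θ := by
  have ht2 : t ^ 2 < 1 := (sq_lt_one_iff_abs_lt_one t).mpr ht
  have hr : √(1 - t ^ 2) ^ 2 = 1 - t ^ 2 := sq_sqrt (sub_nonneg.mpr ht2.le)
  have ht4 : (t ^ 2) ^ 2 < 1 := pow_lt_one₀ (sq_nonneg t) ht2 two_ne_zero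
  have oscillation_sq_lt :
      (2 * t ^ 2 * cos θ - 4 * t * √(1 - t ^ 2) * sin θ) ^ 2 < (3 - (t ^ 2) ^ 2) ^ 2 :=
    calc (2 * t ^ 2 * cos θ - 4 * t * √(1 - t ^ 2) * sin θ) ^ 2
      _ ≤ (2 * t ^ 2) ^ 2 + (4 * t * √(1 - t ^ 2)) ^ 2 := sq_mul_cos_sub_mul_sin_le _ _ θ
      _ = 16 * t ^ 2 - 12 * (t ^ 2) ^ 2 := by linear_combination 16 * t ^ 2 * hr
      _ < (3 - (t ^ 2) ^ 2) ^ 2 := sixteen_mul_sub_twelve_mul_sq_lt ht2.ne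
  have oscillation_gt := (abs_lt_of_sq_lt_sq' oscillation_sq_lt (by linarith)).1
  linear_combination oscillation_gt

end HorizontalCone

/-- **Non-contraction on the algebraic horizontal cone.**  For all `φ ∈ ℝ` and
`t ∈ (0,1)`:  `3 − t⁴ + 2t²·cos 2φ − 4t·√(1−t²)·|sin 2φ| > 0`; equivalently
`4(1 + t²·cos 2φ ∓ t·√(1−t²)·sin 2φ) > 1 + 2t²·cos 2φ + t⁴` for both choices of sign.
Hence the differential of `R` does not contract the angular component of any tangent
vector in the algebraic horizontal cone at any interior point of the cylinder. -/
theorem horizontal_cone_noncontraction (φ t : ℝ) (ht : t ∈ Set.Ioo (0 : ℝ) 1) :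
    0 < 3 - t ^ 4 + 2 * t ^ 2 * Real.cos (2 * φ) -
        4 * t * Real.sqrt (1 - t ^ 2) * |Real.sin (2 * φ)| ∧
    1 + 2 * t ^ 2 * Real.cos (2 * φ) + t ^ 4 <
      4 * (1 + t ^ 2 * Real.cos (2 * φ) - t * Real.sqrt (1 - t ^ 2) * Real.sin (2 * φ)) ∧
    1 + 2 * t ^ 2 * Real.cos (2 * φ) + t ^ 4 <
      4 * (1 + t ^ 2 * Real.cos (2 * φ) + t * Real.sqrt (1 - t ^ 2) * Real.sin (2 * φ)) := by
  have ht' : |t| < 1 := abs_lt.mpr ⟨by linarith [ht.1], ht.2⟩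
  have margin_sub := HorizontalCone.noncontraction_margin_pos ht' (2 * φ)
  have margin_add := HorizontalCone.noncontraction_margin_pos ht' (-(2 * φ))
  rw [Real.cos_neg, Real.sin_neg] at margin_add
  refine ⟨?_, by linarith, by linarith⟩
  rcases abs_choice (Real.sin (2 * φ)) with h | h <;> rw [h]
  · exact margin_sub
  · exact margin_add
end

section
/- Let r ≥ 1 be an integer and let λ > 1 and a ≠ 0 be real numbers. There exist no ε > 0 and function g : ℝ → ℝ that is of class C^{r+1} on (−ε, ε) and satisfies g(λ·v) − λ^r·g(v) = a·v^r for all v with |v| < ε/λ. Consequently, any invariant central manifold u = g(v) of the resonant Poincaré–Dulac normal form (u,v) ↦ (λ^r·u + a·v^r, λ·v) is of class at most C^r at the fixed point. -/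
/-!
Differentiating `g (l * v) - μ • g v = v ^ r • a` exactly `r` times at the fixed point `v = 0` gives
`(l ^ r - μ) • g⁽ʳ⁾(0) = r! • a`. At the resonance `μ = l ^ r` the left-hand side vanishes whatever
`g⁽ʳ⁾(0)` is, so being of class `C^r` at `0` already forces `a = 0`.
-/

open Filter Topology
open scoped Nat

section CohomologicalEquation

variable {𝕜 F : Type*} [NontriviallyNormedField 𝕜] [NormedAddCommGroup F] [NormedSpace 𝕜 F]

-- Mathlib has this for `f` smooth on all of `𝕜`, as `iteratedDeriv_comp_const_smul`.
theorem iteratedDeriv_comp_mul_left (n : ℕ) (c : 𝕜) (f : 𝕜 → F) (x : 𝕜) :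
    iteratedDeriv n (fun y ↦ f (c * y)) x = c ^ n • iteratedDeriv n f (c * x) := by
  induction n generalizing x with
  | zero => simp
  | succ n ih =>
    rw [iteratedDeriv_succ, funext ih, deriv_fun_const_smul_field, deriv_comp_mul_left,
      ← iteratedDeriv_succ, smul_smul, ← pow_succ]

theorem iteratedDeriv_comp_mul_left_sub_smul_zero {r : ℕ} {g : 𝕜 → F} (hg : ContDiffAt 𝕜 r g 0)
    (l μ : 𝕜) :
    iteratedDeriv r (fun v ↦ g (l * v) - μ • g v) 0 = (l ^ r - μ) • iteratedDeriv r g 0 := by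
  have hg_scaled : ContDiffAt 𝕜 r (fun v ↦ g (l * v)) 0 :=
    ContDiffAt.comp 0 (by simpa using hg) (contDiffAt_const.mul contDiffAt_id)
  rw [iteratedDeriv_fun_sub hg_scaled (hg.const_smul μ), iteratedDeriv_comp_mul_left,
    iteratedDeriv_fun_const_smul_field, mul_zero, sub_smul]

theorem iteratedDeriv_pow_smul_const_zero (r : ℕ) (a : F) :
    iteratedDeriv r (fun v : 𝕜 ↦ v ^ r • a) 0 = (r ! : 𝕜) • a := by
  rw [iteratedDeriv_smul_const (contDiffAt_id.pow r), iteratedDeriv_fun_pow_zero, if_pos rfl]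

theorem sub_smul_iteratedDeriv_eq_factorial_smul {r : ℕ} {l μ : 𝕜} {a : F} {g : 𝕜 → F}
    (hg : ContDiffAt 𝕜 r g 0) (heq : ∀ᶠ v in 𝓝 0, g (l * v) - μ • g v = v ^ r • a) :
    (l ^ r - μ) • iteratedDeriv r g 0 = (r ! : 𝕜) • a := by
  rw [← iteratedDeriv_comp_mul_left_sub_smul_zero hg, ← iteratedDeriv_pow_smul_const_zero]
  exact EventuallyEq.iteratedDeriv_eq r heq

theorem no_Cr_plus_one_central_manifold_general [CharZero 𝕜] (r : ℕ) (l : 𝕜) {a : F}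
    (ha : a ≠ 0) :
    ¬∃ g : 𝕜 → F, ContDiffAt 𝕜 r g 0 ∧
      ∀ᶠ v in 𝓝 0, g (l * v) - l ^ r • g v = v ^ r • a := by
  rintro ⟨g, hg, heq⟩
  have hfactorial_smul : (r ! : 𝕜) • a = 0 := by
    rw [← sub_smul_iteratedDeriv_eq_factorial_smul hg heq, sub_self, zero_smul]
  exact smul_ne_zero (Nat.cast_ne_zero.mpr r.factorial_ne_zero) ha hfactorial_smul

end CohomologicalEquation

/-- **Finite smoothness of resonant central manifolds.**  Let `r ≥ 1`, `λ > 1` and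
`a ≠ 0`.  There exist no `ε > 0` and function `g : ℝ → ℝ` of class `C^{r+1}` on
`(−ε, ε)` satisfying `g(λ·v) − λ^r·g(v) = a·v^r` for all `|v| < ε/λ`.  Consequently any
invariant central manifold `u = g(v)` of the Poincaré–Dulac normal form
`(u,v) ↦ (λ^r·u + a·v^r, λ·v)` is of class at most `C^r` at the fixed point. -/
theorem no_Cr_plus_one_central_manifold (r : ℕ) (hr : 1 ≤ r) (l a : ℝ)
    (hl : 1 < l) (ha : a ≠ 0) :
    ¬∃ (ε : ℝ) (g : ℝ → ℝ), 0 < ε ∧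
      ContDiffOn ℝ (r + 1 : ℕ) g (Set.Ioo (-ε) ε) ∧
      ∀ v : ℝ, |v| < ε / l → g (l * v) - l ^ r * g v = a * v ^ r := by
  rintro ⟨ε, g, hε, hg, heq⟩
  have hg_zero : ContDiffAt ℝ r g 0 :=
    (hg.contDiffAt (Ioo_mem_nhds (neg_lt_zero.mpr hε) hε)).of_le (mod_cast r.le_succ)
  have hsmall : ∀ᶠ v : ℝ in 𝓝 0, |v| < ε / l :=
    eventually_abs_sub_lt 0 (div_pos hε (one_pos.trans hl)) |>.mono (by simp)
  refine no_Cr_plus_one_central_manifold_general r l ha ⟨g, hg_zero, hsmall.mono fun v hv ↦ ?_⟩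
  simpa only [smul_eq_mul, mul_comm a] using heq v hv
end

section
/- In the polynomial ring ℂ[U,V,W], the determinant of the 3×3 Jacobian matrix of partial derivatives of the map R̂(U,V,W) = ((U²+V²)², V²(U+W)², (V²+W²)²) equals 32·V·(U·W − V²)·(U+W)²·(U²+V²)·(W²+V²). In particular, the critical locus of R̂ is the union of the plane V = 0, the quadric cone UW = V², and the planes U + W = 0, U = ±iV, and W = ±iV. -/
open MvPolynomial

/-!
The map `R̂` is the componentwise square of the quadratic map
`Q = (U² + V², V(U + W), V² + W²)`. Since `∂(q²) = 2q ∂q`, each row of the Jacobian matrix of `R̂`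
is `2q` times the corresponding row of that of `Q`, so
`det DR̂ = 8 (U² + V²) V (U + W) (V² + W²) det DQ`, while `det DQ = 4 (U + W) (UW - V²)`.
-/

theorem det_derivation_pow {R A n : Type*} [CommSemiring R] [CommRing A] [Algebra R A]
    [Fintype n] [DecidableEq n] (D : n → Derivation R A A) (f : n → A) (k : n → ℕ) :
    (Matrix.of fun i j => D j (f i ^ k i)).det =
      (∏ i, k i * f i ^ (k i - 1)) * (Matrix.of fun i j => D j (f i)).det := by
  rw [← Matrix.det_mul_column]
  congr! 3 with i j
  simp only [Derivation.leibniz_pow, Matrix.of_apply, nsmul_eq_mul, smul_eq_mul, mul_assoc]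

section CommSemiring

variable (R : Type*) [CommSemiring R]

/-- The quadratic map `Q(U,V,W) = (U² + V², V(U + W), V² + W²)` over `R`, with `U = X 0`, `V = X 1`,
`W = X 2`; its componentwise square is the Migdal–Kadanoff renormalization. -/
noncomputable def MKroot : Fin 3 → MvPolynomial (Fin 3) R :=
  ![X 0 ^ 2 + X 1 ^ 2, X 1 * (X 0 + X 2), X 1 ^ 2 + X 2 ^ 2]

theorem jacobian_MKroot :
    (Matrix.of fun i j => pderiv j (MKroot R i)) =
      !![2 * X 0, 2 * X 1, 0;
        X 1, X 0 + X 2, X 1;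
        0, 2 * X 1, 2 * X 2] := by
  ext1 i j
  fin_cases i <;> fin_cases j <;>
    simp [MKroot, pderiv_X, Derivation.leibniz_pow, Derivation.leibniz]

theorem MKroot_sq (i : Fin 3) :
    MKroot R i ^ 2 =
      ![(X 0 ^ 2 + X 1 ^ 2) ^ 2, X 1 ^ 2 * (X 0 + X 2) ^ 2, (X 1 ^ 2 + X 2 ^ 2) ^ 2] i := by
  fin_cases i <;> simp [MKroot, mul_pow]

end CommSemiring

section CommRing

variable (R : Type*) [CommRing R]

theorem det_jacobian_MKroot :
    (Matrix.of fun i j => pderiv j (MKroot R i)).det =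
      4 * (X 0 + X 2) * (X 0 * X 2 - X 1 ^ 2) := by
  rw [jacobian_MKroot, Matrix.det_fin_three]
  simp only [Matrix.of_apply, Matrix.cons_val]
  ring

theorem MK_jacobian_det_general :
    (Matrix.of fun i j : Fin 3 => pderiv j
      ((![(X 0 ^ 2 + X 1 ^ 2) ^ 2, X 1 ^ 2 * (X 0 + X 2) ^ 2, (X 1 ^ 2 + X 2 ^ 2) ^ 2] :
        Fin 3 → MvPolynomial (Fin 3) R) i)).det =
      32 * X 1 * (X 0 * X 2 - X 1 ^ 2) * (X 0 + X 2) ^ 2 *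
        (X 0 ^ 2 + X 1 ^ 2) * (X 2 ^ 2 + X 1 ^ 2) := by
  calc
    _ = (Matrix.of fun i j => pderiv j (MKroot R i ^ 2)).det := by simp only [MKroot_sq]
    _ = (∏ i, 2 * MKroot R i) * (Matrix.of fun i j => pderiv j (MKroot R i)).det := by
      simpa using det_derivation_pow pderiv (MKroot R) fun _ => 2
    _ = 8 * (X 0 ^ 2 + X 1 ^ 2) * (X 1 * (X 0 + X 2)) * (X 1 ^ 2 + X 2 ^ 2) *
        (4 * (X 0 + X 2) * (X 0 * X 2 - X 1 ^ 2)) := by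
      rw [det_jacobian_MKroot]
      simp only [MKroot, Fin.prod_univ_three, Matrix.cons_val]
      ring
    _ = _ := by ring

end CommRing

/-- **The Jacobian of the Migdal–Kadanoff renormalization.**  In `ℂ[U,V,W]` the
determinant of the Jacobian matrix of `R̂` equals
`32·V·(UW − V²)·(U+W)²·(U²+V²)·(W²+V²)`; in particular the critical locus of `R̂` is the
union of the plane `V = 0`, the quadric cone `UW = V²`, and the planes `U+W = 0`,
`U = ±iV`, `W = ±iV`. -/
theorem MK_jacobian_det :
    (Matrix.of fun i j : Fin 3 => pderiv j (MKcomp i)).det =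
      32 * X 1 * (X 0 * X 2 - X 1 ^ 2) * (X 0 + X 2) ^ 2 *
        (X 0 ^ 2 + X 1 ^ 2) * (X 2 ^ 2 + X 1 ^ 2) :=
  MK_jacobian_det_general ℂ
end

section
/- Fix ω ∈ (−π/2, π/2), and for ρ > 0 set φ_ρ = π + ρ·sin ω, z_ρ = exp(iφ_ρ), and t_ρ = 1 − ρ·cos ω. Then as ρ → 0⁺ one has (z_ρ + t_ρ)/(z_ρ⁻¹ + t_ρ) → exp(2iω) and (cos φ_ρ + 1)/(cos φ_ρ + (t_ρ + t_ρ⁻¹)/2) → sin²ω. Thus the indeterminacy point α = (π, 1) blows up under f to the curve Γ(ω) = (2ω, sin²ω) across the cylinder. -/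
/-!
Near `α = (π, 1)` both coordinates of `f` are quotients of quantities vanishing at `α`. Along a
curve through `α` with velocity `(φ', t')`, the first quotient is `0 / 0` to first order, and its
limit `(t' - iφ') / (t' + iφ')` is the ratio of the derivatives. The second is `0 / 0` to second
order: by `cos φ + 1 = 2 cos² (φ / 2)` and `(t + t⁻¹) / 2 - 1 = (t - 1)² / (2t)`, it is a quotient
of combinations of squares of quantities vanishing to first order, with limit
`φ'² / (φ'² + t'²)`. For `(φ', t') = r (sin ω, -cos ω)` these limits are `e^{2iω}` and `sin² ω`.
-/

open Filter Topology

section DerivativeQuotient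

variable {𝕜 𝕜' : Type*} [NontriviallyNormedField 𝕜] [NormedField 𝕜'] [NormedAlgebra 𝕜 𝕜']
  {f g : 𝕜 → 𝕜'} {f' g' : 𝕜'} {s : Set 𝕜} {x : 𝕜}

theorem tendsto_div_of_hasDerivWithinAt (hs : x ∉ s) (hf : HasDerivWithinAt f f' s x)
    (hg : HasDerivWithinAt g g' s x) (hfx : f x = 0) (hgx : g x = 0) (hg' : g' ≠ 0) :
    Tendsto (fun y ↦ f y / g y) (𝓝[s] x) (𝓝 (f' / g')) := by
  rw [hasDerivWithinAt_iff_tendsto_slope' hs] at hf hg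
  refine (hf.div hg hg').congr' ?_
  filter_upwards [self_mem_nhdsWithin] with y hy
  have hyx : algebraMap 𝕜 𝕜' (y - x)⁻¹ ≠ 0 := by
    simpa [sub_eq_zero] using ne_of_mem_of_not_mem hy hs
  simp only [Pi.div_apply, slope_def_module, hfx, hgx, sub_zero, Algebra.smul_def]
  exact mul_div_mul_left _ _ hyx

end DerivativeQuotient

theorem exp_two_mul_I_mul_eq_div (z : ℂ) :
    Complex.exp (2 * Complex.I * z) =
      (Complex.cos z + Complex.sin z * Complex.I) /
        (Complex.cos z - Complex.sin z * Complex.I) := by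
  have hconj : Complex.exp (-z * Complex.I) = Complex.cos z - Complex.sin z * Complex.I := by
    rw [Complex.exp_mul_I, Complex.cos_neg, Complex.sin_neg, neg_mul, sub_eq_add_neg]
  rw [← Complex.exp_mul_I, ← hconj, ← Complex.exp_sub]
  ring_nf

/-- The factor `f` of the renormalization of the diamond hierarchical lattice, from the angular and
vertical coordinates of the cylinder. The angular coordinate of the image is recorded as a complex
number in place of an angle. At the indeterminacy point `(π, 1)` it has the junk value `(0, 0)`. -/
noncomputable def diamondFactor (φ t : ℝ) : ℂ × ℝ :=
  ((Complex.exp (Complex.I * φ) + t) / ((Complex.exp (Complex.I * φ))⁻¹ + t),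
    (Real.cos φ + 1) / (Real.cos φ + (t + t⁻¹) / 2))

/-- The curve `Γ(ω) = (2ω, sin² ω)` onto which the indeterminacy point of `diamondFactor` blows up,
with its angular coordinate as a point of the unit circle in `ℂ`. -/
noncomputable def blowupCurve (ω : ℝ) : ℂ × ℝ :=
  (Complex.exp (2 * Complex.I * ω), Real.sin ω ^ 2)

theorem diamondFactor_snd_eq (φ : ℝ) {t : ℝ} (ht : t ≠ 0) :
    (diamondFactor φ t).2 =
      2 * Real.cos (φ / 2) ^ 2 / (2 * Real.cos (φ / 2) ^ 2 + (t - 1) ^ 2 / (2 * t)) := by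
  have hcos : Real.cos φ + 1 = 2 * Real.cos (φ / 2) ^ 2 := by
    rw [Real.cos_sq, mul_div_cancel₀ φ two_ne_zero]
    ring
  have hden : Real.cos φ + (t + t⁻¹) / 2 = Real.cos φ + 1 + (t - 1) ^ 2 / (2 * t) := by
    field_simp
    ring
  simp only [diamondFactor, hden, hcos]

section Curves

variable {φ t : ℝ → ℝ} {φ' t' x : ℝ} {s : Set ℝ}

theorem tendsto_diamondFactor_fst (hs : x ∉ s) (hφ : HasDerivWithinAt φ φ' s x)
    (ht : HasDerivWithinAt t t' s x) (hφx : φ x = Real.pi) (htx : t x = 1)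
    (hv : φ' ^ 2 + t' ^ 2 ≠ 0) :
    Tendsto (fun y ↦ (diamondFactor (φ y) (t y)).1) (𝓝[s] x)
      (𝓝 ((t' - φ' * Complex.I) / (t' + φ' * Complex.I))) := by
  have hexp : Complex.exp (Complex.I * φ x) = -1 := by
    rw [hφx, mul_comm, Complex.exp_pi_mul_I]
  have hz : HasDerivWithinAt (fun y ↦ Complex.exp (Complex.I * φ y)) (-(φ' * Complex.I)) s x :=
    (hφ.ofReal_comp.const_mul Complex.I).cexp.congr_deriv (by rw [hexp]; ring)
  have hzinv : HasDerivWithinAt (fun y ↦ (Complex.exp (Complex.I * φ y))⁻¹)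
      (φ' * Complex.I) s x :=
    (hz.fun_inv (Complex.exp_ne_zero _)).congr_deriv (by rw [hexp]; ring)
  have hv' : (t' + φ' * Complex.I : ℂ) ≠ 0 := by
    rwa [ne_eq, ← Complex.normSq_eq_zero, Complex.normSq_add_mul_I, add_comm]
  have hnum := (hz.fun_add ht.ofReal_comp).congr_deriv (neg_add_eq_sub _ _)
  have hden := (hzinv.fun_add ht.ofReal_comp).congr_deriv (add_comm _ _)
  exact tendsto_div_of_hasDerivWithinAt hs hnum hden (by simp [hexp, htx])
    (by simp only [hexp, htx]; norm_num) hv'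

theorem tendsto_diamondFactor_snd (hs : x ∉ s) (hφ : HasDerivWithinAt φ φ' s x)
    (ht : HasDerivWithinAt t t' s x) (hφx : φ x = Real.pi) (htx : t x = 1)
    (hv : φ' ^ 2 + t' ^ 2 ≠ 0) :
    Tendsto (fun y ↦ (diamondFactor (φ y) (t y)).2) (𝓝[s] x)
      (𝓝 (φ' ^ 2 / (φ' ^ 2 + t' ^ 2))) := by
  have hcos : HasDerivWithinAt (fun y ↦ Real.cos (φ y / 2)) (-(φ' / 2)) s x :=
    (hφ.div_const 2).cos.congr_deriv (by rw [hφx, Real.sin_pi_div_two]; ring)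
  have hcos_slope := (hasDerivWithinAt_iff_tendsto_slope' hs).1 hcos
  have ht_slope := (hasDerivWithinAt_iff_tendsto_slope' hs).1 ht
  have ht_lim : Tendsto t (𝓝[s] x) (𝓝 1) := htx ▸ ht.continuousWithinAt
  have hnum := (hcos_slope.pow 2).const_mul 2
  have hden := hnum.add ((ht_slope.pow 2).div (ht_lim.const_mul 2) (by norm_num))
  have hden_lim : 2 * (-(φ' / 2)) ^ 2 + t' ^ 2 / (2 * 1) = (φ' ^ 2 + t' ^ 2) / 2 := by ring
  have hlim := hnum.div hden (by rw [hden_lim]; exact div_ne_zero hv two_ne_zero)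
  have hlim_eq : 2 * (-(φ' / 2)) ^ 2 / (2 * (-(φ' / 2)) ^ 2 + t' ^ 2 / (2 * 1)) =
      φ' ^ 2 / (φ' ^ 2 + t' ^ 2) := by
    rw [hden_lim]
    field_simp
  rw [hlim_eq] at hlim
  refine hlim.congr' ?_
  filter_upwards [self_mem_nhdsWithin, ht_lim.eventually_ne one_ne_zero] with y hy hty
  have hyx : y - x ≠ 0 := sub_ne_zero.2 (ne_of_mem_of_not_mem hy hs)
  simp only [Pi.div_apply, slope_def_field, hφx, htx, Real.cos_pi_div_two, sub_zero,
    diamondFactor_snd_eq _ hty]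
  rw [← mul_div_mul_left _ _ (pow_ne_zero 2 hyx)]
  congr 1 <;> field_simp

theorem blowup_of_indeterminacy_point_general {r ω : ℝ} (hr : r ≠ 0) (hs : x ∉ s)
    (hφ : HasDerivWithinAt φ (r * Real.sin ω) s x)
    (ht : HasDerivWithinAt t (-(r * Real.cos ω)) s x) (hφx : φ x = Real.pi) (htx : t x = 1) :
    Tendsto (fun y ↦ diamondFactor (φ y) (t y)) (𝓝[s] x) (𝓝 (blowupCurve ω)) := by
  have hspeed : (r * Real.sin ω) ^ 2 + (-(r * Real.cos ω)) ^ 2 = r ^ 2 := by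
    linear_combination r ^ 2 * Real.sin_sq_add_cos_sq ω
  have hv := hspeed ▸ pow_ne_zero 2 hr
  refine (Prod.tendsto_iff _ _).2 ⟨?_, ?_⟩
  · convert tendsto_diamondFactor_fst hs hφ ht hφx htx hv using 2
    have hr' : (-r : ℂ) ≠ 0 := by exact_mod_cast neg_ne_zero.2 hr
    rw [blowupCurve, exp_two_mul_I_mul_eq_div, ← mul_div_mul_left _ _ hr']
    push_cast
    congr 1 <;> ring
  · convert tendsto_diamondFactor_snd hs hφ ht hφx htx hv using 2
    rw [hspeed, mul_pow, mul_div_cancel_left₀ _ (pow_ne_zero 2 hr), blowupCurve]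

end Curves

/-- **Blow-up of the indeterminacy point.**  Fix `ω ∈ (−π/2, π/2)` and, for `ρ > 0`, set
`φ_ρ = π + ρ·sin ω`, `z_ρ = e^{iφ_ρ}`, `t_ρ = 1 − ρ·cos ω`.  Then, as `ρ → 0⁺`,
`(z_ρ + t_ρ)/(z_ρ⁻¹ + t_ρ) → e^{2iω}` and
`(cos φ_ρ + 1)/(cos φ_ρ + (t_ρ + t_ρ⁻¹)/2) → sin²ω`: the indeterminacy point
`α = (π, 1)` blows up under `f` to the curve `Γ(ω) = (2ω, sin²ω)` across the cylinder. -/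
theorem blowup_of_indeterminacy_point (ω : ℝ)
    (hω : ω ∈ Set.Ioo (-(Real.pi / 2)) (Real.pi / 2)) :
    Filter.Tendsto (fun ρ : ℝ =>
        (Complex.exp (Complex.I * ((Real.pi + ρ * Real.sin ω : ℝ) : ℂ)) +
            ((1 - ρ * Real.cos ω : ℝ) : ℂ)) /
          ((Complex.exp (Complex.I * ((Real.pi + ρ * Real.sin ω : ℝ) : ℂ)))⁻¹ +
            ((1 - ρ * Real.cos ω : ℝ) : ℂ)))
      (nhdsWithin 0 (Set.Ioi 0))
      (nhds (Complex.exp (2 * Complex.I * (ω : ℂ)))) ∧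
    Filter.Tendsto (fun ρ : ℝ =>
        (Real.cos (Real.pi + ρ * Real.sin ω) + 1) /
          (Real.cos (Real.pi + ρ * Real.sin ω) +
            ((1 - ρ * Real.cos ω) + (1 - ρ * Real.cos ω)⁻¹) / 2))
      (nhdsWithin 0 (Set.Ioi 0))
      (nhds (Real.sin ω ^ 2)) :=
  (Prod.tendsto_iff _ _).1 <| blowup_of_indeterminacy_point_general (s := Set.Ioi 0) one_ne_zero
    Set.self_notMem_Ioi (((hasDerivWithinAt_id 0 _).mul_const _).const_add _)
    (((hasDerivWithinAt_id 0 _).mul_const _).const_sub _ |>.congr_deriv (by simp))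
    (by simp) (by simp)
end
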